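/- arXiv:1510.02903 — 2 statements merged into one kernel-verified Lean document; each statement's English description precedes it below -/
import Mathlib

section
/- Assume conditions (H1) and (H2) hold and let T_β = T(h_β) be the SR procedure with threshold h_β = (1−α₂(β,k*_β))/(ϱ_{2,β}·α₂(β,k*_β)). Then for any 0 < β < 1, T_β ∈ H(β,k*_β,m*_β). If additionally condition (A2) holds with limit I ∈ (0,∞), then as β → 0: inf_{τ∈H(β,k*_β,m*_β)} R_ν(τ) / R_ν(T_β) → 1 for every ν ≥ 0, inf_{τ∈H(β,k*_β,m*_β)} sup_{ν≥0} R_ν(τ) / sup_{ν≥0} R_ν(T_β) → 1, and R_ν(T_β) ~ inf_{τ∈H(β,k*_β,m*_β)} R_ν(τ) ~ |log β|/I for every ν ≥ 0, as well as sup_{ν≥0} R_ν(T_β) ~ inf_{τ∈H(β,k*_β,m*_β)} sup_{ν≥0} R_ν(τ) ~ |log β|/I. -/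
/-!
All the quantities in the asymptotic part are squeezed between a lower bound
`(1 - o(1)) |log β| / I` for the risk of every procedure in the class at a fixed `ν`, and an upper
bound `(1 + o(1)) |log β| / I` for the risk of the Shiryaev–Roberts procedure, uniform in `ν`.

*Membership* (`SR_mem_Hclass`). On `{T(h) = m}` one has `R_m ≥ h`, and
`∫_{T = m} R_m dP∞ = ∑_{k<m} P_k(T = m)` by the likelihood-ratio identity. Summing over `m ≤ n`
gives `P∞(T(h) ≤ n) ≤ n / h` (`mul_Pinf_SR_le`). With `n = k*` and `h = h_β` the right-hand side is
at most `β` because `q^k + k (1 - q) q^k ≤ 1` for `q ∈ [0, 1]`.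

*Lower bound* (`eventually_le_risk`). The first growth condition forces `m*` to be of order at least
`|log β|²`, so the first window alone gives `P∞(τ ≤ ν + L) ≤ β` for `L ≈ (1 - δ)|log β| / I`.
Changing measure at the fixed time `ν + L`, where `Z ≤ (1 + δ) I L` outside an event of vanishing
`P_ν`-probability, shows `P_ν(τ ≤ ν + L) → 0` uniformly over the class.

*Upper bound* (`eventually_risk_SR_le`). As `R_n ≥ exp Z_n^ν`, the event `T > ν + n` entails
`Z_{ν+n}^ν < log h_β`, and `log h_β ≤ (1 + δ)|log β|` by the second growth condition. Hence for
`n ≥ N ≈ (1 + 4δ)|log β| / I` this probability is at most the `n`-th term of the convergent series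
of uniform complete convergence, and the risk is at most `N` plus a constant.
-/

open MeasureTheory Filter Set Topology ENNReal

noncomputable section

/-- A general change-point model: a filtration `F` on `Ω`, probability measures `P k`
(the change occurs immediately after time `k`) and `Pinf` (no change), such that `P k`
and `Pinf` agree on `F n` for `n ≤ k` and are mutually absolutely continuous
on `F n` for `n > k`. -/
structure ChangePointModel (Ω : Type) [m0 : MeasurableSpace Ω] where
  F : ℕ → MeasurableSpace Ω
  F_le : ∀ n, F n ≤ m0
  F_mono : Monotone F
  F_zero : F 0 = ⊥
  P : ℕ → Measure Ω
  Pinf : Measure Ω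
  P_prob : ∀ k, IsProbabilityMeasure (P k)
  Pinf_prob : IsProbabilityMeasure Pinf
  agree : ∀ k n : ℕ, n ≤ k → (P k).trim (F_le n) = Pinf.trim (F_le n)
  ac₁ : ∀ k n : ℕ, k < n → (P k).trim (F_le n) ≪ Pinf.trim (F_le n)
  ac₂ : ∀ k n : ℕ, k < n → Pinf.trim (F_le n) ≪ (P k).trim (F_le n)

namespace ChangePointModel

variable {Ω : Type} [m0 : MeasurableSpace Ω] (M : ChangePointModel Ω)

/-- The log-likelihood ratio `Z n k = log (d(P k|F n)/d(P∞|F n))`. -/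
def Z (n k : ℕ) (ω : Ω) : ℝ :=
  Real.log ((((M.P k).trim (M.F_le n)).rnDeriv (M.Pinf.trim (M.F_le n))) ω).toReal

/-- A detection procedure: a stopping time of the filtration `F` with values in `{1,2,…,∞}`. -/
def IsDetection (τ : Ω → ℕ∞) : Prop :=
  (∀ ω, 1 ≤ τ ω) ∧ ∀ n : ℕ, MeasurableSet[M.F n] {ω | τ ω ≤ (n : ℕ∞)}

/-- The detection risk `R_ν(τ) = E_ν (τ - ν)⁺`. -/
def risk (ν : ℕ) (τ : Ω → ℕ∞) : ℝ≥0∞ :=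
  ∫⁻ ω, ((τ ω - (ν : ℕ∞) : ℕ∞) : ℝ≥0∞) ∂(M.P ν)

/-- The conditional detection risk `R*_ν(τ) = E_ν (τ - ν | τ > ν)`. -/
def crisk (ν : ℕ) (τ : Ω → ℕ∞) : ℝ≥0∞ :=
  M.risk ν τ / M.P ν {ω | (ν : ℕ∞) < τ ω}

/-- The moment-`ℓ` detection risk `E_ν ((τ - ν)⁺)^ℓ`. -/
def riskPow (ℓ : ℝ) (ν : ℕ) (τ : Ω → ℕ∞) : ℝ≥0∞ :=
  ∫⁻ ω, ((τ ω - (ν : ℕ∞) : ℕ∞) : ℝ≥0∞) ^ ℓ ∂(M.P ν)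

/-- The conditional moment-`ℓ` detection risk `E_ν ((τ - ν)^ℓ | τ > ν)`. -/
def criskPow (ℓ : ℝ) (ν : ℕ) (τ : Ω → ℕ∞) : ℝ≥0∞ :=
  M.riskPow ℓ ν τ / M.P ν {ω | (ν : ℕ∞) < τ ω}

/-- The Bayesian class `Δ(α,ϱ)` of detection procedures with weighted probability of
false alarm at most `α` (geometric prior with parameter `ϱ`). -/
def Delta (α ϱ : ℝ) : Set (Ω → ℕ∞) :=
  {τ | M.IsDetection τ ∧
    ∑' k : ℕ, ENNReal.ofReal (ϱ * (1 - ϱ) ^ k) * M.Pinf {ω | τ ω ≤ (k : ℕ∞)}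
      ≤ ENNReal.ofReal α}

/-- The Shiryaev–Roberts statistic `R_n = ∑_{k=1}^n exp (Z_n^{k-1})`. -/
def SRstat (n : ℕ) (ω : Ω) : ℝ :=
  ∑ k ∈ Finset.range n, Real.exp (M.Z n k ω)

/-- The Shiryaev–Roberts procedure with threshold `h`. -/
def SR (h : ℝ) (ω : Ω) : ℕ∞ :=
  sInf {n : ℕ∞ | ∃ m : ℕ, n = (m : ℕ∞) ∧ 1 ≤ m ∧ h ≤ M.SRstat m ω}

/-- Condition (A1): `Z (k+n) k / n → I` almost surely under `P k`, for every `k`. -/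
def CondA1 (I : ℝ) : Prop :=
  ∀ k : ℕ, ∀ᵐ ω ∂(M.P k),
    Tendsto (fun n : ℕ => M.Z (k + n) k ω / n) atTop (𝓝 I)

/-- Condition (A2): uniform complete convergence of `Z (k+n) k / n` to `I`. -/
def CondA2 (I : ℝ) : Prop :=
  ∀ ε : ℝ, 0 < ε →
    (∑' n : ℕ, ⨆ k : ℕ,
      M.P k {ω | ε < |M.Z (k + (n + 1)) k ω / (n + 1) - I|}) < ⊤

/-- Uniform `r`-complete convergence of `Z (k+n) k / n` to `I`. -/
def CondAr (r I : ℝ) : Prop :=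
  ∀ ε : ℝ, 0 < ε →
    (∑' n : ℕ, ENNReal.ofReal ((n + 1 : ℝ) ^ (r - 1)) * ⨆ k : ℕ,
      M.P k {ω | ε < |M.Z (k + (n + 1)) k ω / (n + 1) - I|}) < ⊤

/-- The class `H(β,k*,m*)` : local probability of a false alarm in windows of
length `m*` starting at `1 ≤ k ≤ k* - m*` is at most `β`. -/
def Hclass (β : ℝ) (kstar mstar : ℕ) : Set (Ω → ℕ∞) :=
  {τ | M.IsDetection τ ∧ ∀ k : ℕ, 1 ≤ k → k + mstar ≤ kstar →
    M.Pinf {ω | (k : ℕ∞) ≤ τ ω ∧ τ ω < ((k + mstar : ℕ) : ℕ∞)} ≤ ENNReal.ofReal β}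

/-- The class `H*(β,k*,m*)` : local conditional probability of a false alarm
`P_∞(τ < k+m* | τ > k)` is at most `β` for `1 ≤ k ≤ k* - m*`. -/
def HclassStar (β : ℝ) (kstar mstar : ℕ) : Set (Ω → ℕ∞) :=
  {τ | M.IsDetection τ ∧ ∀ k : ℕ, 1 ≤ k → k + mstar ≤ kstar →
    M.Pinf {ω | (k : ℕ∞) < τ ω ∧ τ ω < ((k + mstar : ℕ) : ℕ∞)}
        / M.Pinf {ω | (k : ℕ∞) < τ ω} ≤ ENNReal.ofReal β}

end ChangePointModel

/-- `ϱ_{1,β} = 1/(1+|log β|)`. -/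
def rho1 (β : ℝ) : ℝ := 1 / (1 + |Real.log β|)

/-- `ϱ_{2,β} = ϱ_{1,β}/(1+|log|log β||)`. -/
def rho2 (β : ℝ) : ℝ := rho1 β / (1 + |Real.log (|Real.log β|)|)

/-- `α₁(β,m*) = β + (1-ϱ_{1,β})^{m*+1}`. -/
def alpha1 (β : ℝ) (m : ℕ) : ℝ := β + (1 - rho1 β) ^ (m + 1)

/-- `α₂(β,k*) = β (1-ϱ_{2,β})^{k*}`. -/
def alpha2 (β : ℝ) (k : ℕ) : ℝ := β * (1 - rho2 β) ^ k

/-- `α₃(β,k*) = β (1-ϱ_{2,β})^{k*} / (1+β)`. -/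
def alpha3 (β : ℝ) (k : ℕ) : ℝ := β * (1 - rho2 β) ^ k / (1 + β)

/-! ### Change of measure -/

namespace ChangePointModel

variable {Ω : Type} [m0 : MeasurableSpace Ω] (M : ChangePointModel Ω)

lemma measurable_Z (n k : ℕ) : Measurable[M.F n] (M.Z n k) := by
  unfold Z
  exact Real.measurable_log.comp
    (ENNReal.measurable_toReal.comp (Measure.measurable_rnDeriv _ _))

/-- Wald's likelihood-ratio identity on `F n`. The value `log 0 = 0` built into `Z` is harmless,
because the density is positive `P∞`-almost everywhere. -/
lemma setLIntegral_exp_Z {k n : ℕ} (hkn : k < n) {A : Set Ω} (hA : MeasurableSet[M.F n] A) :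
    ∫⁻ ω in A, ENNReal.ofReal (Real.exp (M.Z n k ω)) ∂M.Pinf = M.P k A := by
  have := M.P_prob k
  have := M.Pinf_prob
  have hpos := ae_of_ae_trim (M.F_le n) (Measure.rnDeriv_pos' (M.ac₂ k n hkn))
  have hfin := ae_of_ae_trim (M.F_le n)
    (Measure.rnDeriv_ne_top ((M.P k).trim (M.F_le n)) (M.Pinf.trim (M.F_le n)))
  have h1 : ∫⁻ ω in A, ENNReal.ofReal (Real.exp (M.Z n k ω)) ∂M.Pinf
      = ∫⁻ ω in A, ((M.P k).trim (M.F_le n)).rnDeriv (M.Pinf.trim (M.F_le n)) ω ∂M.Pinf := by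
    apply lintegral_congr_ae
    apply ae_restrict_of_ae
    filter_upwards [hpos, hfin] with ω h0 ht
    rw [Z, Real.exp_log (ENNReal.toReal_pos h0.ne' ht), ENNReal.ofReal_toReal ht]
  rw [h1, ← setLIntegral_trim (M.F_le n) (Measure.measurable_rnDeriv _ _) hA,
    Measure.setLIntegral_rnDeriv (M.ac₁ k n hkn), trim_measurableSet_eq (M.F_le n) hA]

/-- The change-of-measure inequality behind the lower bound for the risk: splitting `A` according
to whether the log-likelihood ratio exceeds `C`. -/
lemma P_le_exp_mul_Pinf_add {k n : ℕ} (hkn : k < n) {A : Set Ω} (hA : MeasurableSet[M.F n] A)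
    (C : ℝ) :
    M.P k A ≤ ENNReal.ofReal (Real.exp C) * M.Pinf A + M.P k {ω | C < M.Z n k ω} := by
  have hB : MeasurableSet[M.F n] {ω | M.Z n k ω ≤ C} :=
    M.measurable_Z n k measurableSet_Iic
  have hAB : MeasurableSet[M.F n] (A ∩ {ω | M.Z n k ω ≤ C}) :=
    @MeasurableSet.inter _ (M.F n) _ _ hA hB
  calc M.P k A ≤ M.P k (A ∩ {ω | M.Z n k ω ≤ C} ∪ {ω | C < M.Z n k ω}) := by
        apply measure_mono
        intro ω hω
        rcases le_or_gt (M.Z n k ω) C with h | h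
        · exact Or.inl ⟨hω, h⟩
        · exact Or.inr h
    _ ≤ M.P k (A ∩ {ω | M.Z n k ω ≤ C}) + M.P k {ω | C < M.Z n k ω} := measure_union_le _ _
    _ ≤ _ := by
        gcongr
        rw [← M.setLIntegral_exp_Z hkn hAB]
        calc _ ≤ ∫⁻ ω in A ∩ {ω | M.Z n k ω ≤ C}, ENNReal.ofReal (Real.exp C) ∂M.Pinf := by
              apply setLIntegral_mono' (M.F_le n _ hAB)
              intro ω hω
              exact ENNReal.ofReal_le_ofReal (Real.exp_le_exp.2 hω.2)
          _ = ENNReal.ofReal (Real.exp C) * M.Pinf (A ∩ {ω | M.Z n k ω ≤ C}) :=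
              setLIntegral_const _ _
          _ ≤ _ := by gcongr; exact inter_subset_left

/-! ### The Shiryaev–Roberts procedure and its false alarm probability -/

lemma measurable_SRstat (n : ℕ) : Measurable[M.F n] (M.SRstat n) := by
  unfold SRstat
  exact @Finset.measurable_sum _ _ _ _ _ _ (M.F n) _ _
    fun k _ => Real.measurable_exp.comp (M.measurable_Z n k)

lemma SR_le_of_le {h : ℝ} {ω : Ω} {m : ℕ} (hm : 1 ≤ m) (hh : h ≤ M.SRstat m ω) :
    M.SR h ω ≤ (m : ℕ∞) := sInf_le ⟨m, rfl, hm, hh⟩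

lemma exists_of_SR_le {h : ℝ} {ω : Ω} {n : ℕ} (hn : M.SR h ω ≤ (n : ℕ∞)) :
    ∃ m : ℕ, M.SR h ω = m ∧ 1 ≤ m ∧ m ≤ n ∧ h ≤ M.SRstat m ω := by
  have hne : {n : ℕ∞ | ∃ m : ℕ, n = (m : ℕ∞) ∧ 1 ≤ m ∧ h ≤ M.SRstat m ω}.Nonempty := by
    by_contra hcon
    rw [Set.not_nonempty_iff_eq_empty] at hcon
    rw [SR, hcon, sInf_empty] at hn
    exact absurd hn (by simp)
  obtain ⟨m, hm, h1, h2⟩ := csInf_mem hne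
  refine ⟨m, hm, h1, ?_, h2⟩
  have : M.SR h ω = m := hm
  rw [this] at hn
  exact_mod_cast hn

lemma isDetection_SR (h : ℝ) : M.IsDetection (M.SR h) := by
  constructor
  · intro ω
    apply le_sInf
    rintro n ⟨m, rfl, hm, -⟩
    exact_mod_cast hm
  · intro n
    have : {ω | M.SR h ω ≤ (n : ℕ∞)} = ⋃ m ∈ Finset.Icc 1 n, {ω | h ≤ M.SRstat m ω} := by
      ext ω
      simp only [mem_ofPred_eq, mem_iUnion, Finset.mem_Icc, exists_prop]
      constructor
      · intro hn
        obtain ⟨m, -, h1, h2, h3⟩ := M.exists_of_SR_le hn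
        exact ⟨m, ⟨h1, h2⟩, h3⟩
      · rintro ⟨m, ⟨h1, h2⟩, h3⟩
        exact (M.SR_le_of_le h1 h3).trans (by exact_mod_cast h2)
    rw [this]
    refine @Finset.measurableSet_biUnion _ _ (M.F n) _ _ fun m hm => ?_
    apply M.F_mono (Finset.mem_Icc.1 hm).2
    exact M.measurable_SRstat m measurableSet_Ici

variable {M}

lemma IsDetection.measurableSet_eq {τ : Ω → ℕ∞} (hτ : M.IsDetection τ) (n : ℕ) :
    MeasurableSet[M.F n] {ω | τ ω = (n : ℕ∞)} := by
  rcases n with _ | n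
  · have : {ω | τ ω = ((0 : ℕ) : ℕ∞)} = {ω | τ ω ≤ ((0 : ℕ) : ℕ∞)} := by ext; simp
    rw [this]
    exact hτ.2 0
  · have : {ω | τ ω = ((n + 1 : ℕ) : ℕ∞)}
        = {ω | τ ω ≤ ((n + 1 : ℕ) : ℕ∞)} \ {ω | τ ω ≤ (n : ℕ∞)} := by
      ext ω
      simp only [mem_ofPred_eq, Set.mem_sdiff, not_le]
      constructor
      · intro h
        rw [h]
        exact ⟨le_rfl, by exact_mod_cast Nat.lt_succ_self n⟩
      · rintro ⟨h1, h2⟩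
        refine le_antisymm h1 ?_
        push_cast
        exact Order.add_one_le_of_lt h2
    rw [this]
    exact @MeasurableSet.diff _ (M.F (n + 1)) _ _ (hτ.2 _) (M.F_mono (Nat.le_succ n) _ (hτ.2 n))

lemma IsDetection.measurableSet_lt {τ : Ω → ℕ∞} (hτ : M.IsDetection τ) (n : ℕ) :
    MeasurableSet {ω | (n : ℕ∞) < τ ω} := by
  have : {ω | (n : ℕ∞) < τ ω} = {ω | τ ω ≤ (n : ℕ∞)}ᶜ := by ext; simp
  rw [this]
  exact (M.F_le n _ (hτ.2 n)).compl

variable (M)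

/-- `P∞(T(h) ≤ n) ≤ n / h`. On `{T = m}` the statistic is at least `h`, so by the likelihood-ratio
identity `h P∞(T = m) ≤ ∑_{k<m} P_k(T = m)`; summing over `m ≤ n` leaves at most `n` total
probabilities, each at most one. -/
lemma mul_Pinf_SR_le (h : ℝ) (n : ℕ) :
    ENNReal.ofReal h * M.Pinf {ω | M.SR h ω ≤ (n : ℕ∞)} ≤ n := by
  have hT := M.isDetection_SR h
  have key : ∀ m ≤ n, ENNReal.ofReal h * M.Pinf {ω | M.SR h ω = (m : ℕ∞)}
      ≤ ∑ k ∈ Finset.range n, M.P k {ω | M.SR h ω = (m : ℕ∞)} := by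
    intro m hmn
    have hme := hT.measurableSet_eq m
    calc ENNReal.ofReal h * M.Pinf {ω | M.SR h ω = (m : ℕ∞)}
        = ∫⁻ _ in {ω | M.SR h ω = (m : ℕ∞)}, ENNReal.ofReal h ∂M.Pinf :=
          (setLIntegral_const _ _).symm
      _ ≤ ∫⁻ ω in {ω | M.SR h ω = (m : ℕ∞)},
            ∑ k ∈ Finset.range m, ENNReal.ofReal (Real.exp (M.Z m k ω)) ∂M.Pinf := by
          apply setLIntegral_mono' (M.F_le m _ hme)
          intro ω hω
          obtain ⟨m', h1, -, -, h4⟩ := M.exists_of_SR_le (le_of_eq hω)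
          have : m' = m := by
            have h2 : ((m' : ℕ) : ℕ∞) = m := h1.symm.trans hω
            exact_mod_cast h2
          subst this
          rw [← ENNReal.ofReal_sum_of_nonneg fun k _ => (Real.exp_pos _).le]
          exact ENNReal.ofReal_le_ofReal h4
      _ = ∑ k ∈ Finset.range m, M.P k {ω | M.SR h ω = (m : ℕ∞)} := by
          rw [lintegral_finsetSum]
          · apply Finset.sum_congr rfl
            intro k hk
            exact M.setLIntegral_exp_Z (Finset.mem_range.1 hk) hme
          · intro k _
            exact ENNReal.measurable_ofReal.comp
              (Real.measurable_exp.comp ((M.measurable_Z m k).mono (M.F_le m) le_rfl))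
      _ ≤ _ := Finset.sum_le_sum_of_subset (Finset.range_mono hmn)
  have hdisj : Set.PairwiseDisjoint (↑(Finset.range (n + 1)))
      (fun m : ℕ => {ω | M.SR h ω = (m : ℕ∞)}) := by
    intro a _ b _ hab
    refine Set.disjoint_left.2 fun ω h1 h2 => hab ?_
    have h3 : (a : ℕ∞) = b := (show M.SR h ω = a from h1).symm.trans h2
    exact_mod_cast h3
  calc ENNReal.ofReal h * M.Pinf {ω | M.SR h ω ≤ (n : ℕ∞)}
      ≤ ENNReal.ofReal h * ∑ m ∈ Finset.range (n + 1), M.Pinf {ω | M.SR h ω = (m : ℕ∞)} := by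
        gcongr
        refine le_trans (measure_mono ?_) (measure_biUnion_finset_le _ _)
        intro ω hω
        obtain ⟨m, h1, -, h3, -⟩ := M.exists_of_SR_le hω
        simp only [mem_iUnion, Finset.mem_range, exists_prop]
        exact ⟨m, by omega, h1⟩
    _ = ∑ m ∈ Finset.range (n + 1), ENNReal.ofReal h * M.Pinf {ω | M.SR h ω = (m : ℕ∞)} :=
        Finset.mul_sum _ _ _
    _ ≤ ∑ m ∈ Finset.range (n + 1), ∑ k ∈ Finset.range n, M.P k {ω | M.SR h ω = (m : ℕ∞)} :=
        Finset.sum_le_sum fun m hm => key m (by have := Finset.mem_range.1 hm; omega)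
    _ = ∑ k ∈ Finset.range n, ∑ m ∈ Finset.range (n + 1), M.P k {ω | M.SR h ω = (m : ℕ∞)} :=
        Finset.sum_comm
    _ ≤ ∑ k ∈ Finset.range n, 1 := by
        apply Finset.sum_le_sum
        intro k _
        have := M.P_prob k
        rw [← measure_biUnion_finset hdisj fun m _ => M.F_le m _ (hT.measurableSet_eq m)]
        exact prob_le_one
    _ = n := by simp

end ChangePointModel

lemma rho1_pos (β : ℝ) : 0 < rho1 β := by unfold rho1; positivity

lemma rho2_pos (β : ℝ) : 0 < rho2 β := by
  have := rho1_pos β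
  unfold rho2; positivity

lemma rho1_lt_one {β : ℝ} (hβ : β ∈ Set.Ioo (0 : ℝ) 1) : rho1 β < 1 := by
  have : 0 < |Real.log β| := abs_pos.2 (Real.log_neg hβ.1 hβ.2).ne
  unfold rho1
  rw [div_lt_one (by positivity)]
  linarith

lemma rho2_lt_one {β : ℝ} (hβ : β ∈ Set.Ioo (0 : ℝ) 1) : rho2 β < 1 := by
  refine lt_of_le_of_lt ?_ (rho1_lt_one hβ)
  unfold rho2
  exact div_le_self (rho1_pos β).le (by linarith [abs_nonneg (Real.log |Real.log β|)])

lemma alpha2_pos {β : ℝ} (hβ : β ∈ Set.Ioo (0 : ℝ) 1) (k : ℕ) : 0 < alpha2 β k :=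
  mul_pos hβ.1 (pow_pos (by linarith [rho2_lt_one hβ]) k)

lemma alpha2_le {β : ℝ} (hβ : β ∈ Set.Ioo (0 : ℝ) 1) (k : ℕ) : alpha2 β k ≤ β :=
  mul_le_of_le_one_right hβ.1.le
    (pow_le_one₀ (by linarith [rho2_lt_one hβ]) (by linarith [rho2_pos β]))

/-- A consequence of `1 = (q + (1 - q))^k ≥ q^k + k (1 - q) q^(k-1)`. -/
lemma pow_add_mul_pow_le_one {q : ℝ} (h0 : 0 ≤ q) (h1 : q ≤ 1) (k : ℕ) :
    q ^ k + k * (1 - q) * q ^ k ≤ 1 := by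
  induction k with
  | zero => simp
  | succ k ih =>
    have h2 : q ^ k ≤ 1 := pow_le_one₀ h0 h1
    have h3 : 0 ≤ q ^ k := pow_nonneg h0 k
    have h4 : 0 ≤ (k : ℝ) * (1 - q) * q ^ k := by
      have : 0 ≤ 1 - q := by linarith
      positivity
    push_cast
    rw [pow_succ]
    nlinarith [mul_nonneg h0 (sub_nonneg.2 h1),
      mul_nonneg h3 (mul_nonneg (sub_nonneg.2 h1) (sub_nonneg.2 h1)),
      mul_le_mul_of_nonneg_left ih h0]

lemma SR_mem_Hclass {Ω : Type} [m0 : MeasurableSpace Ω] (M : ChangePointModel Ω) {β : ℝ}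
    (hβ : β ∈ Set.Ioo (0 : ℝ) 1) (k m : ℕ) :
    M.SR ((1 - alpha2 β k) / (rho2 β * alpha2 β k)) ∈ M.Hclass β k m := by
  refine ⟨M.isDetection_SR _, fun j _ hjk => ?_⟩
  set h := (1 - alpha2 β k) / (rho2 β * alpha2 β k) with hh
  have ha := alpha2_pos hβ k
  have ha1 : alpha2 β k < 1 := (alpha2_le hβ k).trans_lt hβ.2
  have hr := rho2_pos β
  have hhpos : 0 < h := div_pos (by linarith) (by positivity)
  have hkey : (k : ℝ) ≤ β * h := by
    have hb := pow_add_mul_pow_le_one (q := 1 - rho2 β) (by linarith [rho2_lt_one hβ])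
      (by linarith) k
    have hq : 0 < (1 - rho2 β) ^ k := pow_pos (by linarith [rho2_lt_one hβ]) k
    rw [hh, ← mul_div_assoc, le_div_iff₀ (by positivity)]
    unfold alpha2
    have : (k : ℝ) * rho2 β * (1 - rho2 β) ^ k ≤ 1 - β * (1 - rho2 β) ^ k := by
      nlinarith [hβ.1, hβ.2]
    nlinarith [mul_le_mul_of_nonneg_left this hβ.1.le]
  have h1 : M.Pinf {ω | (j : ℕ∞) ≤ M.SR h ω ∧ M.SR h ω < ((j + m : ℕ) : ℕ∞)}
      ≤ M.Pinf {ω | M.SR h ω ≤ (k : ℕ∞)} := by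
    apply measure_mono
    rintro ω ⟨-, h2⟩
    exact h2.le.trans (by exact_mod_cast hjk)
  refine h1.trans ?_
  have h2 := M.mul_Pinf_SR_le h k
  have h3 : ENNReal.ofReal h * M.Pinf {ω | M.SR h ω ≤ (k : ℕ∞)}
      ≤ ENNReal.ofReal h * ENNReal.ofReal β := by
    refine h2.trans ?_
    rw [← ENNReal.ofReal_mul hhpos.le, ← ENNReal.ofReal_natCast]
    exact ENNReal.ofReal_le_ofReal (by linarith)
  exact (ENNReal.mul_le_mul_iff_right (ENNReal.ofReal_pos.2 hhpos).ne' ENNReal.ofReal_ne_top).1 h3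

/-! ### Asymptotics of the parameters as `β → 0` -/

lemma tendsto_abs_log : Tendsto (fun β : ℝ => |Real.log β|) (𝓝[>] (0 : ℝ)) atTop :=
  tendsto_abs_atBot_atTop.comp Real.tendsto_log_nhdsGT_zero

lemma eventually_mem_Ioo : ∀ᶠ β : ℝ in 𝓝[>] (0 : ℝ), β ∈ Set.Ioo (0 : ℝ) 1 :=
  Ioo_mem_nhdsGT one_pos

/-- Under the first growth condition `m*` grows at least like `|log β|² / 2`: indeed
`α₁ ≥ (1 - ϱ₁)^(m*+1)` and `-log (1 - ϱ₁) = log (1 + 1/|log β|) ≤ 1/|log β|`. -/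
lemma eventually_le_mstar {mstar : ℝ → ℕ}
    (hH1 : Tendsto (fun β : ℝ => |Real.log (alpha1 β (mstar β))| / |Real.log β|)
      (𝓝[>] (0 : ℝ)) (𝓝 1)) (K : ℝ) :
    ∀ᶠ β : ℝ in 𝓝[>] (0 : ℝ), K * |Real.log β| ≤ mstar β := by
  have h12 : ∀ᶠ β : ℝ in 𝓝[>] (0 : ℝ),
      1 / 2 < |Real.log (alpha1 β (mstar β))| / |Real.log β| :=
    hH1.eventually_const_lt (by norm_num)
  filter_upwards [h12, eventually_mem_Ioo, tendsto_abs_log.eventually_gt_atTop 4,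
    tendsto_abs_log.eventually_gt_atTop (2 * (K + 1))] with β h1 hβ h4 hK
  set l := |Real.log β| with hl
  have hl0 : 0 < l := by linarith
  rw [lt_div_iff₀ hl0] at h1
  have hq0 : 0 < 1 - rho1 β := by linarith [rho1_lt_one hβ]
  have hq1 : 1 - rho1 β ≤ 1 := by linarith [rho1_pos β]
  have hqp : 0 < (1 - rho1 β) ^ (mstar β + 1) := pow_pos hq0 _
  have hqp1 : (1 - rho1 β) ^ (mstar β + 1) ≤ 1 := pow_le_one₀ hq0.le hq1
  have hup : Real.log (alpha1 β (mstar β)) ≤ 1 := by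
    have h := Real.log_le_sub_one_of_pos (x := alpha1 β (mstar β))
      (by unfold alpha1; linarith [hβ.1])
    unfold alpha1 at h ⊢
    linarith [hβ.2]
  have hlow : -((mstar β + 1 : ℝ) / l) ≤ Real.log (alpha1 β (mstar β)) := by
    have h5 : Real.log ((1 - rho1 β) ^ (mstar β + 1)) ≤ Real.log (alpha1 β (mstar β)) :=
      Real.log_le_log hqp (by unfold alpha1; linarith [hβ.1])
    rw [Real.log_pow] at h5
    have h6 : -(1 / l) ≤ Real.log (1 - rho1 β) := by
      have h7 := Real.one_sub_inv_le_log_of_pos hq0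
      have h8 : 1 - (1 - rho1 β)⁻¹ = -(1 / l) := by
        unfold rho1
        rw [← hl]
        have : 1 - 1 / (1 + l) = l / (1 + l) := by field_simp; ring
        rw [this, inv_div]
        field_simp
        ring
      linarith
    have h9 : (0 : ℝ) ≤ ((mstar β + 1 : ℕ) : ℝ) := by positivity
    have h10 := mul_le_mul_of_nonneg_left h6 h9
    push_cast at h5 h10
    have : (mstar β + 1 : ℝ) * -(1 / l) = -((mstar β + 1 : ℝ) / l) := by ring
    linarith
  have hm : l / 2 ≤ (mstar β + 1 : ℝ) / l := by
    rcases abs_cases (Real.log (alpha1 β (mstar β))) with ⟨h, -⟩ | ⟨h, -⟩ <;> linarith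
  rw [le_div_iff₀ hl0] at hm
  nlinarith

/-- Under the second growth condition the logarithm of the threshold is at most
`(1 + o(1)) |log β|`. -/
lemma eventually_log_threshold_le {kstar : ℝ → ℕ}
    (hH2 : Tendsto (fun β : ℝ => |Real.log (alpha2 β (kstar β))| / |Real.log β|)
      (𝓝[>] (0 : ℝ)) (𝓝 1)) {δ : ℝ} (hδ : 0 < δ) :
    ∀ᶠ β : ℝ in 𝓝[>] (0 : ℝ),
      Real.log ((1 - alpha2 β (kstar β)) / (rho2 β * alpha2 β (kstar β)))
        ≤ (1 + δ) * |Real.log β| := by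
  have h12 : ∀ᶠ β : ℝ in 𝓝[>] (0 : ℝ),
      |Real.log (alpha2 β (kstar β))| / |Real.log β| < 1 + δ / 2 :=
    hH2.eventually_lt_const (by linarith)
  have hlog : ∀ᶠ β : ℝ in 𝓝[>] (0 : ℝ),
      ‖Real.log (1 + |Real.log β|)‖ ≤ δ / 8 * ‖id (1 + |Real.log β|)‖ :=
    (tendsto_atTop_add_const_left _ 1 tendsto_abs_log).eventually
      (Real.isLittleO_log_id_atTop.bound (by positivity))
  filter_upwards [h12, hlog, eventually_mem_Ioo, tendsto_abs_log.eventually_gt_atTop 1]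
    with β h1 h2 hβ h4
  set l := |Real.log β| with hl
  have hl0 : 0 < l := by linarith
  rw [div_lt_iff₀ hl0] at h1
  have ha := alpha2_pos hβ (kstar β)
  have ha1 : alpha2 β (kstar β) < 1 := (alpha2_le hβ _).trans_lt hβ.2
  have hr := rho2_pos β
  have hL0 : 0 ≤ Real.log l := Real.log_nonneg h4.le
  have hL : Real.log l ≤ l := by linarith [Real.log_le_sub_one_of_pos hl0]
  have hrho : -Real.log (rho2 β) ≤ δ / 2 * l := by
    have e : rho2 β = ((1 + l) * (1 + |Real.log l|))⁻¹ := by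
      unfold rho2 rho1
      rw [← hl, div_div, one_div]
    rw [e, Real.log_inv, neg_neg, abs_of_nonneg hL0,
      Real.log_mul (by positivity) (by positivity)]
    have h5 : Real.log (1 + Real.log l) ≤ Real.log (1 + l) :=
      Real.log_le_log (by positivity) (by linarith)
    have h6 : Real.log (1 + l) ≤ δ / 8 * (1 + l) := by
      refine (le_abs_self _).trans ?_
      simpa [abs_of_pos (show 0 < 1 + l by linarith)] using h2
    nlinarith
  rw [Real.log_div (by linarith) (by positivity), Real.log_mul hr.ne' ha.ne']
  have h7 : Real.log (1 - alpha2 β (kstar β)) ≤ 0 :=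
    Real.log_nonpos (by linarith) (by linarith)
  have h8 := neg_le_abs (Real.log (alpha2 β (kstar β)))
  nlinarith

/-! ### Lower bound for the risk in the class -/

namespace ChangePointModel

variable {Ω : Type} [m0 : MeasurableSpace Ω] (M : ChangePointModel Ω)

/-- The `n`-th term (with the time index shifted by one) of the series in the condition of uniform
complete convergence. -/
def devSup (I ε : ℝ) (n : ℕ) : ℝ≥0∞ :=
  ⨆ k : ℕ, M.P k {ω | ε < |M.Z (k + (n + 1)) k ω / (n + 1) - I|}

lemma P_le_devSup (I ε : ℝ) (n k : ℕ) :
    M.P k {ω | ε < |M.Z (k + (n + 1)) k ω / (n + 1) - I|} ≤ M.devSup I ε n :=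
  le_iSup (fun k : ℕ => M.P k {ω | ε < |M.Z (k + (n + 1)) k ω / (n + 1) - I|}) k

/-- Markov's inequality for `(τ - ν)⁺` at level `L` under `P ν`. -/
lemma mul_le_risk {τ : Ω → ℕ∞} (hτ : M.IsDetection τ) (ν L : ℕ) :
    (L : ℝ≥0∞) * (1 - M.P ν {ω | τ ω ≤ ((ν + L : ℕ) : ℕ∞)}) ≤ M.risk ν τ := by
  have := M.P_prob ν
  have hm := M.F_le _ _ (hτ.2 (ν + L))
  rw [← prob_compl_eq_one_sub hm, ← lintegral_indicator_const hm.compl]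
  apply lintegral_mono
  intro ω
  by_cases h : ω ∈ {ω | τ ω ≤ ((ν + L : ℕ) : ℕ∞)}ᶜ
  · rw [Set.indicator_of_mem h]
    have h1 : ((ν + L : ℕ) : ℕ∞) ≤ τ ω :=
      (not_le.1 (show ¬ τ ω ≤ ((ν + L : ℕ) : ℕ∞) from h)).le
    have h2 : ((L : ℕ) : ℕ∞) ≤ τ ω - ν := by
      apply ENat.le_sub_of_add_le_left (ENat.natCast_ne_top _)
      exact_mod_cast h1
    have h3 := ENat.toENNReal_le.2 h2
    simpa using h3
  · rw [Set.indicator_of_notMem h]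
    exact zero_le

/-- The uniform lower bound `(1 - o(1)) |log β| / I` for the risk over the whole class. With
`L ≈ (1 - δ)|log β| / I`, the window starting at time `1` contains `[1, ν + L]`, so
`P∞(τ ≤ ν + L) ≤ β`; a change of measure with `Z ≤ (1 + δ) I L ≤ (1 - δ²)|log β|` turns this into
`P_ν(τ ≤ ν + L) ≤ β^(δ²) + o(1)`. -/
lemma eventually_le_risk {mstar kstar : ℝ → ℕ}
    (hk : ∀ β ∈ Set.Ioo (0 : ℝ) 1, mstar β < kstar β)
    (hH1 : Tendsto (fun β : ℝ => |Real.log (alpha1 β (mstar β))| / |Real.log β|)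
      (𝓝[>] (0 : ℝ)) (𝓝 1))
    {I : ℝ} (hI : 0 < I) (hA : M.CondA2 I) (ν : ℕ) {δ : ℝ} (hδ : 0 < δ) (hδ1 : δ < 1 / 4) :
    ∀ᶠ β : ℝ in 𝓝[>] (0 : ℝ), ∀ τ ∈ M.Hclass β (kstar β) (mstar β),
      ENNReal.ofReal ((1 - 4 * δ) * (|Real.log β| / I)) ≤ M.risk ν τ := by
  have hx : Tendsto (fun β : ℝ => |Real.log β| / I) (𝓝[>] (0 : ℝ)) atTop :=
    tendsto_abs_log.atTop_div_const hI
  have hfl : Tendsto (fun β : ℝ => ⌊(1 - δ) * (|Real.log β| / I)⌋₊) (𝓝[>] (0 : ℝ)) atTop :=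
    tendsto_nat_floor_atTop.comp (hx.const_mul_atTop (by linarith))
  have hs : Tendsto (M.devSup I (δ * I)) atTop (𝓝 0) :=
    ENNReal.tendsto_atTop_zero_of_tsum_ne_top (hA (δ * I) (by positivity)).ne
  have hs1 := ((hs.comp (tendsto_sub_atTop_nat 1)).comp hfl).eventually_le_const
    (ENNReal.ofReal_pos.2 hδ)
  have hexp : ∀ᶠ β : ℝ in 𝓝[>] (0 : ℝ), Real.exp (-(δ ^ 2 * |Real.log β|)) ≤ δ :=
    ((Real.tendsto_exp_neg_atTop_nhds_zero).comp
      (tendsto_abs_log.const_mul_atTop (by positivity : 0 < δ ^ 2))).eventually_le_const hδ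
  filter_upwards [hs1, hexp, eventually_mem_Ioo, eventually_le_mstar hH1 (1 / I + 1),
    tendsto_abs_log.eventually_ge_atTop (ν : ℝ), hx.eventually_ge_atTop (1 / δ),
    hfl.eventually_ge_atTop 1] with β hs2 he hβ hm hν hx1 hL1 τ hτ
  set x := |Real.log β| / I with hxdef
  set L := ⌊(1 - δ) * x⌋₊ with hL
  have hl : |Real.log β| = I * x := by rw [hxdef]; field_simp
  have hx0 : 0 < x := lt_of_lt_of_le (by positivity) hx1
  have hLle : (L : ℝ) ≤ (1 - δ) * x :=
    Nat.floor_le (mul_nonneg (by linarith) hx0.le)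
  have hLge : (1 - 2 * δ) * x ≤ L := by
    have h1 := Nat.lt_floor_add_one ((1 - δ) * x)
    rw [← hL] at h1
    have h2 : 1 ≤ δ * x := by rwa [div_le_iff₀' hδ] at hx1
    linarith
  have hmL : ν + L ≤ mstar β := by
    have : (ν : ℝ) + L ≤ mstar β := by
      have : (1 / I + 1) * |Real.log β| = x + |Real.log β| := by rw [hxdef]; ring
      nlinarith
    exact_mod_cast this
  set A := {ω | τ ω ≤ ((ν + L : ℕ) : ℕ∞)} with hAdef
  have hPA : M.Pinf A ≤ ENNReal.ofReal β := by
    refine le_trans (measure_mono ?_) (hτ.2 1 le_rfl (by have := hk β hβ; omega))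
    intro ω hω
    refine ⟨by exact_mod_cast hτ.1.1 ω, lt_of_le_of_lt hω ?_⟩
    exact_mod_cast (by omega : ν + L < 1 + mstar β)
  have hdev : M.P ν {ω | (1 + δ) * I * L < M.Z (ν + L) ν ω} ≤ ENNReal.ofReal δ := by
    refine le_trans ?_ hs2
    refine le_trans (measure_mono ?_) (M.P_le_devSup I (δ * I) _ ν)
    intro ω hω
    have e1 : L - 1 + 1 = L := by omega
    have e2 : ((L - 1 : ℕ) : ℝ) + 1 = L := by exact_mod_cast e1
    have hω' : (1 + δ) * I * L < M.Z (ν + L) ν ω := hω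
    have hLpos : (0 : ℝ) < L := by exact_mod_cast hL1
    change δ * I < |M.Z (ν + (L - 1 + 1)) ν ω / (((L - 1 : ℕ) : ℝ) + 1) - I|
    rw [e1, e2]
    refine lt_of_lt_of_le ?_ (le_abs_self _)
    rw [lt_sub_iff_add_lt, lt_div_iff₀ hLpos]
    linarith
  have hP : M.P ν A ≤ ENNReal.ofReal (2 * δ) := by
    refine (M.P_le_exp_mul_Pinf_add (by omega) (hτ.1.2 (ν + L)) ((1 + δ) * I * L)).trans ?_
    rw [two_mul, ENNReal.ofReal_add hδ.le hδ.le]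
    refine add_le_add ?_ hdev
    calc _ ≤ ENNReal.ofReal (Real.exp ((1 + δ) * I * L)) * ENNReal.ofReal β := by gcongr
      _ = ENNReal.ofReal (Real.exp ((1 + δ) * I * L + Real.log β)) := by
          rw [← ENNReal.ofReal_mul (Real.exp_pos _).le, Real.exp_add, Real.exp_log hβ.1]
      _ ≤ _ := by
          refine ENNReal.ofReal_le_ofReal (le_trans (Real.exp_le_exp.2 ?_) he)
          have h1 : Real.log β = -|Real.log β| := by
            rw [abs_of_neg (Real.log_neg hβ.1 hβ.2), neg_neg]
          rw [h1, abs_neg, abs_abs, hl]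
          nlinarith [mul_le_mul_of_nonneg_left hLle (by positivity : 0 ≤ (1 + δ) * I)]
  refine le_trans ?_ (M.mul_le_risk hτ.1 ν L)
  calc ENNReal.ofReal ((1 - 4 * δ) * x) ≤ ENNReal.ofReal (L * (1 - 2 * δ)) := by
        apply ENNReal.ofReal_le_ofReal
        nlinarith [mul_le_mul_of_nonneg_right hLge (by linarith : 0 ≤ 1 - 2 * δ),
          mul_nonneg (sq_nonneg δ) hx0.le]
    _ = L * (1 - ENNReal.ofReal (2 * δ)) := by
        rw [ENNReal.ofReal_mul (by positivity), ENNReal.ofReal_natCast,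
          ENNReal.ofReal_sub _ (by positivity), ENNReal.ofReal_one]
    _ ≤ _ := by gcongr

/-! ### Upper bound for the risk of the Shiryaev–Roberts procedure -/

lemma toENNReal_le_add_tsum (X : ℕ∞) (N : ℕ) :
    (X : ℝ≥0∞) ≤ N + ∑' n : ℕ, if ((N + n : ℕ) : ℕ∞) < X then 1 else 0 := by
  induction X using ENat.recTopCoe with
  | top =>
    have : ∑' n : ℕ, (if ((N + n : ℕ) : ℕ∞) < ⊤ then (1 : ℝ≥0∞) else 0) = ⊤ := by
      simp
    rw [this]
    simp
  | coe x =>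
    have h1 : ∑ n ∈ Finset.range (x - N),
          (if ((N + n : ℕ) : ℕ∞) < (x : ℕ∞) then (1 : ℝ≥0∞) else 0)
        ≤ ∑' n : ℕ, if ((N + n : ℕ) : ℕ∞) < (x : ℕ∞) then 1 else 0 := ENNReal.sum_le_tsum _
    have h2 : ∑ n ∈ Finset.range (x - N),
          (if ((N + n : ℕ) : ℕ∞) < (x : ℕ∞) then (1 : ℝ≥0∞) else 0) = ((x - N : ℕ) : ℝ≥0∞) := by
      rw [Finset.sum_congr rfl (g := fun _ => (1 : ℝ≥0∞))]
      · simp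
      · intro n hn
        have := Finset.mem_range.1 hn
        rw [if_pos (by exact_mod_cast (by omega : N + n < x))]
    rw [h2] at h1
    refine le_trans ?_ (add_le_add_right h1 _)
    rw [ENat.toENNReal_coe]
    exact_mod_cast (by omega : x ≤ N + (x - N))

/-- Tail-sum bound for the risk. -/
lemma risk_le_add_tsum {τ : Ω → ℕ∞} (hτ : M.IsDetection τ) (ν N : ℕ) :
    M.risk ν τ ≤ N + ∑' n : ℕ, M.P ν {ω | ((ν + (N + n) : ℕ) : ℕ∞) < τ ω} := by
  have := M.P_prob ν
  calc M.risk ν τ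
      ≤ ∫⁻ ω, N + ∑' n : ℕ,
          {ω | ((ν + (N + n) : ℕ) : ℕ∞) < τ ω}.indicator (fun _ => (1 : ℝ≥0∞)) ω ∂M.P ν := by
        apply lintegral_mono
        intro ω
        refine (toENNReal_le_add_tsum _ N).trans ?_
        apply add_le_add_right
        apply ENNReal.tsum_le_tsum
        intro n
        simp only [Set.indicator_apply, mem_ofPred_eq]
        split_ifs with h1 h2
        · exact le_rfl
        · exact absurd (by
            push_cast at h1 ⊢
            exact lt_tsub_iff_left.1 h1) h2
        · exact zero_le
        · exact le_rfl
    _ = N + ∑' n : ℕ, M.P ν {ω | ((ν + (N + n) : ℕ) : ℕ∞) < τ ω} := by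
        rw [lintegral_add_left measurable_const, lintegral_const, measure_univ, mul_one,
          lintegral_tsum]
        · congr 1
          apply tsum_congr
          intro n
          rw [lintegral_indicator_const (hτ.measurableSet_lt _), one_mul]
        · intro n
          exact (measurable_const.indicator (hτ.measurableSet_lt _)).aemeasurable

/-- Since `R_{ν+p+1} ≥ exp Z_{ν+p+1}^ν`, the event `T > ν + p + 1` forces the log-likelihood ratio
to lie below `log h`, a large deviation from its drift once `p` is large. -/
lemma P_SR_lt_le {I δ h : ℝ} {p : ℕ} (hp : Real.log h ≤ (1 - δ) * I * (p + 1)) (ν : ℕ) :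
    M.P ν {ω | ((ν + (p + 1) : ℕ) : ℕ∞) < M.SR h ω} ≤ M.devSup I (δ * I) p := by
  refine le_trans (measure_mono ?_) (M.P_le_devSup I (δ * I) _ ν)
  intro ω hω
  have h1 : M.SRstat (ν + (p + 1)) ω < h := by
    by_contra hcon
    exact absurd (M.SR_le_of_le (by omega) (not_lt.1 hcon)) (not_le.2 hω)
  have h2 : Real.exp (M.Z (ν + (p + 1)) ν ω) ≤ M.SRstat (ν + (p + 1)) ω :=
    Finset.single_le_sum (f := fun k => Real.exp (M.Z (ν + (p + 1)) k ω))
      (fun k _ => (Real.exp_pos _).le) (Finset.mem_range.2 (by omega))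
  have h3 : M.Z (ν + (p + 1)) ν ω < (1 - δ) * I * (p + 1) :=
    lt_of_lt_of_le ((Real.lt_log_iff_exp_lt ((Real.exp_pos _).trans (h2.trans_lt h1))).2
      (h2.trans_lt h1)) hp
  have hpos : (0 : ℝ) < p + 1 := by positivity
  change δ * I < |M.Z (ν + (p + 1)) ν ω / (p + 1) - I|
  refine lt_of_lt_of_le ?_ (neg_le_abs _)
  rw [lt_neg, sub_lt_iff_lt_add, div_lt_iff₀ hpos]
  linarith

lemma eventually_risk_SR_le {kstar : ℝ → ℕ}
    (hH2 : Tendsto (fun β : ℝ => |Real.log (alpha2 β (kstar β))| / |Real.log β|)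
      (𝓝[>] (0 : ℝ)) (𝓝 1))
    {I : ℝ} (hI : 0 < I) (hA : M.CondA2 I) {δ : ℝ} (hδ : 0 < δ) (hδ1 : δ < 1 / 4) :
    ∀ᶠ β : ℝ in 𝓝[>] (0 : ℝ), ∀ ν : ℕ,
      M.risk ν (M.SR ((1 - alpha2 β (kstar β)) / (rho2 β * alpha2 β (kstar β))))
        ≤ ENNReal.ofReal ((1 + 5 * δ) * (|Real.log β| / I)) := by
  have hx : Tendsto (fun β : ℝ => |Real.log β| / I) (𝓝[>] (0 : ℝ)) atTop :=
    tendsto_abs_log.atTop_div_const hI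
  have hS : ∑' n, M.devSup I (δ * I) n ≠ ⊤ := (hA (δ * I) (by positivity)).ne
  set S := (∑' n, M.devSup I (δ * I) n).toReal
  filter_upwards [eventually_log_threshold_le hH2 hδ, hx.eventually_gt_atTop 0,
    hx.eventually_ge_atTop ((2 + S) / δ)] with β hh hx0 hxS ν
  set h := (1 - alpha2 β (kstar β)) / (rho2 β * alpha2 β (kstar β))
  set x := |Real.log β| / I with hxdef
  have hl : |Real.log β| = I * x := by rw [hxdef]; field_simp
  set N := ⌈(1 + 4 * δ) * x⌉₊ with hN
  have hNge : (1 + 4 * δ) * x ≤ N := Nat.le_ceil _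
  have hNle : (N : ℝ) < (1 + 4 * δ) * x + 1 := Nat.ceil_lt_add_one (by positivity)
  have hthr : ∀ n : ℕ, Real.log h ≤ (1 - δ) * I * (((N + n : ℕ) : ℝ) + 1) := by
    intro n
    -- `1 + δ ≤ (1 - δ) (1 + 4 δ)` because `δ ≤ 1 / 2`.
    have h1 : (1 + δ) * x ≤ (1 - δ) * ((1 + 4 * δ) * x) := by nlinarith [mul_pos hδ hx0]
    have h2 : (1 + 4 * δ) * x ≤ ((N + n : ℕ) : ℝ) + 1 := by
      push_cast
      linarith [(Nat.cast_nonneg n : (0 : ℝ) ≤ n)]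
    have h3 : (1 + δ) * x ≤ (1 - δ) * (((N + n : ℕ) : ℝ) + 1) :=
      h1.trans (mul_le_mul_of_nonneg_left h2 (by linarith))
    rw [hl] at hh
    nlinarith [mul_le_mul_of_nonneg_left h3 hI.le]
  calc M.risk ν (M.SR h)
      ≤ ((N + 1 : ℕ) : ℝ≥0∞) + ∑' n : ℕ, M.P ν {ω | ((ν + (N + 1 + n) : ℕ) : ℕ∞) < M.SR h ω} :=
        M.risk_le_add_tsum (M.isDetection_SR h) ν (N + 1)
    _ ≤ ((N + 1 : ℕ) : ℝ≥0∞) + ∑' n : ℕ, M.devSup I (δ * I) (N + n) := by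
        gcongr with n
        have h1 := M.P_SR_lt_le (hthr n) ν
        rwa [show N + n + 1 = N + 1 + n by omega] at h1
    _ ≤ ((N + 1 : ℕ) : ℝ≥0∞) + ∑' n : ℕ, M.devSup I (δ * I) n := by
        apply add_le_add_right
        exact ENNReal.tsum_comp_le_tsum_of_injective (add_right_injective N) _
    _ = ENNReal.ofReal (((N + 1 : ℕ) : ℝ) + S) := by
        rw [ENNReal.ofReal_add (by positivity) ENNReal.toReal_nonneg, ENNReal.ofReal_natCast,
          ENNReal.ofReal_toReal hS]
    _ ≤ _ := by
        apply ENNReal.ofReal_le_ofReal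
        rw [div_le_iff₀' hδ] at hxS
        push_cast
        linarith

end ChangePointModel

/-! ### Conclusion -/

/-- First-order equivalence from two-sided bounds with arbitrarily small relative error. -/
lemma tendsto_div_one_of_bounds {f : ℝ → ℝ≥0∞} {x : ℝ → ℝ} (hx : Tendsto x (𝓝[>] (0 : ℝ)) atTop)
    (hlow : ∀ δ : ℝ, 0 < δ → δ < 1 / 4 →
      ∀ᶠ β in 𝓝[>] (0 : ℝ), ENNReal.ofReal ((1 - 4 * δ) * x β) ≤ f β)
    (hup : ∀ δ : ℝ, 0 < δ → δ < 1 / 4 →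
      ∀ᶠ β in 𝓝[>] (0 : ℝ), f β ≤ ENNReal.ofReal ((1 + 5 * δ) * x β)) :
    Tendsto (fun β => f β / ENNReal.ofReal (x β)) (𝓝[>] (0 : ℝ)) (𝓝 1) := by
  -- The bounds as functions of `δ` tend to `1` as `δ → 0+`.
  have hlim : ∀ c : ℝ, Tendsto (fun δ : ℝ => ENNReal.ofReal (1 + c * δ)) (𝓝[>] (0 : ℝ)) (𝓝 1) := by
    intro c
    have h1 : Tendsto (fun δ : ℝ => 1 + c * δ) (𝓝 0) (𝓝 (1 + c * 0)) :=
      (continuous_const.add (continuous_const.mul continuous_id)).tendsto 0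
    rw [mul_zero, add_zero] at h1
    have h2 := (ENNReal.continuous_ofReal.tendsto 1).comp h1
    rw [ENNReal.ofReal_one] at h2
    exact h2.mono_left nhdsWithin_le_nhds
  have hδ : ∀ᶠ δ : ℝ in 𝓝[>] (0 : ℝ), δ ∈ Set.Ioo (0 : ℝ) (1 / 4) := Ioo_mem_nhdsGT (by norm_num)
  refine tendsto_order.2 ⟨fun a ha => ?_, fun a ha => ?_⟩
  · obtain ⟨δ, h1, h2⟩ := (((hlim (-4)).eventually_const_lt ha).and hδ).exists
    filter_upwards [hlow δ h2.1 h2.2, hx.eventually_gt_atTop 0] with β h3 h4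
    refine lt_of_lt_of_le h1 ?_
    rw [ENNReal.le_div_iff_mul_le (Or.inl (ENNReal.ofReal_pos.2 h4).ne')
      (Or.inl ENNReal.ofReal_ne_top), ← ENNReal.ofReal_mul (by linarith [h2.2])]
    convert h3 using 3
    ring
  · obtain ⟨δ, h1, h2⟩ := (((hlim 5).eventually_lt_const ha).and hδ).exists
    filter_upwards [hup δ h2.1 h2.2, hx.eventually_gt_atTop 0] with β h3 h4
    refine lt_of_le_of_lt ?_ h1
    rwa [ENNReal.div_le_iff (ENNReal.ofReal_pos.2 h4).ne' ENNReal.ofReal_ne_top,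
      ← ENNReal.ofReal_mul (by linarith [h2.1])]

lemma tendsto_div_of_tendsto_div {f g : ℝ → ℝ≥0∞} {x : ℝ → ℝ}
    (hx : Tendsto x (𝓝[>] (0 : ℝ)) atTop)
    (hf : Tendsto (fun β => f β / ENNReal.ofReal (x β)) (𝓝[>] (0 : ℝ)) (𝓝 1))
    (hg : Tendsto (fun β => g β / ENNReal.ofReal (x β)) (𝓝[>] (0 : ℝ)) (𝓝 1)) :
    Tendsto (fun β => f β / g β) (𝓝[>] (0 : ℝ)) (𝓝 1) := by
  have h := ENNReal.Tendsto.div hf (Or.inl one_ne_zero) hg (Or.inl ENNReal.one_ne_top)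
  rw [div_one] at h
  refine h.congr' ?_
  filter_upwards [hx.eventually_gt_atTop 0] with β hβ
  rw [div_eq_mul_inv (f β), div_eq_mul_inv (g β), ENNReal.mul_div_mul_right]
  · exact ENNReal.inv_ne_zero.2 ENNReal.ofReal_ne_top
  · exact ENNReal.inv_ne_top.2 (ENNReal.ofReal_pos.2 hβ).ne'

/-- Under (H1) and (H2), for every `0 < β < 1` the SR procedure `T_β` with
threshold `h_β = (1-α₂(β,k*_β))/(ϱ_{2,β} α₂(β,k*_β))` belongs to `H(β,k*_β,m*_β)`; and if in
addition (A2) holds with limit `I ∈ (0,∞)`, then `T_β` is first-order asymptotically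
uniformly pointwise optimal and minimax in `H(β,k*_β,m*_β)`, all the optimal risks and the
risks of `T_β` being asymptotically equivalent to `|log β|/I` as `β → 0`. -/
theorem statement6
    {Ω : Type} [m0 : MeasurableSpace Ω] (M : ChangePointModel Ω)
    (mstar kstar : ℝ → ℕ)
    (hm1 : ∀ β ∈ Set.Ioo (0 : ℝ) 1, 1 ≤ mstar β)
    (hk : ∀ β ∈ Set.Ioo (0 : ℝ) 1, mstar β < kstar β)
    (hH1 : Tendsto (fun β : ℝ => |Real.log (alpha1 β (mstar β))| / |Real.log β|)
      (𝓝[>] (0 : ℝ)) (𝓝 1))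
    (hH2 : Tendsto (fun β : ℝ => |Real.log (alpha2 β (kstar β))| / |Real.log β|)
      (𝓝[>] (0 : ℝ)) (𝓝 1))
    (I : ℝ) (hI : 0 < I) :
    (∀ β ∈ Set.Ioo (0 : ℝ) 1,
      M.SR ((1 - alpha2 β (kstar β)) / (rho2 β * alpha2 β (kstar β)))
        ∈ M.Hclass β (kstar β) (mstar β)) ∧
    (M.CondA2 I →
      (∀ ν : ℕ,
        Tendsto (fun β : ℝ =>
          (⨅ τ ∈ M.Hclass β (kstar β) (mstar β), M.risk ν τ)
            / M.risk ν (M.SR ((1 - alpha2 β (kstar β)) / (rho2 β * alpha2 β (kstar β)))))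
          (𝓝[>] (0 : ℝ)) (𝓝 1)) ∧
      (Tendsto (fun β : ℝ =>
          (⨅ τ ∈ M.Hclass β (kstar β) (mstar β), ⨆ ν : ℕ, M.risk ν τ)
            / (⨆ ν : ℕ,
                M.risk ν (M.SR ((1 - alpha2 β (kstar β)) / (rho2 β * alpha2 β (kstar β))))))
          (𝓝[>] (0 : ℝ)) (𝓝 1)) ∧
      (∀ ν : ℕ,
        Tendsto (fun β : ℝ =>
          M.risk ν (M.SR ((1 - alpha2 β (kstar β)) / (rho2 β * alpha2 β (kstar β))))
            / ENNReal.ofReal (|Real.log β| / I))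
          (𝓝[>] (0 : ℝ)) (𝓝 1)) ∧
      (∀ ν : ℕ,
        Tendsto (fun β : ℝ =>
          (⨅ τ ∈ M.Hclass β (kstar β) (mstar β), M.risk ν τ)
            / ENNReal.ofReal (|Real.log β| / I))
          (𝓝[>] (0 : ℝ)) (𝓝 1)) ∧
      (Tendsto (fun β : ℝ =>
          (⨆ ν : ℕ,
              M.risk ν (M.SR ((1 - alpha2 β (kstar β)) / (rho2 β * alpha2 β (kstar β)))))
            / ENNReal.ofReal (|Real.log β| / I))
          (𝓝[>] (0 : ℝ)) (𝓝 1)) ∧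
      (Tendsto (fun β : ℝ =>
          (⨅ τ ∈ M.Hclass β (kstar β) (mstar β), ⨆ ν : ℕ, M.risk ν τ)
            / ENNReal.ofReal (|Real.log β| / I))
          (𝓝[>] (0 : ℝ)) (𝓝 1))) := by
  have hmem : ∀ β ∈ Set.Ioo (0 : ℝ) 1,
      M.SR ((1 - alpha2 β (kstar β)) / (rho2 β * alpha2 β (kstar β)))
        ∈ M.Hclass β (kstar β) (mstar β) := fun β hβ => SR_mem_Hclass M hβ _ _
  refine ⟨hmem, fun hA => ?_⟩
  have hx : Tendsto (fun β : ℝ => |Real.log β| / I) (𝓝[>] (0 : ℝ)) atTop :=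
    tendsto_abs_log.atTop_div_const hI
  -- Every quantity lies between the infimum over the class of one risk (at `ν`, or at `0` for the
  -- suprema) and the supremum of the risks of the Shiryaev–Roberts procedure.
  have hlow := fun ν δ h0 h1 => M.eventually_le_risk hk hH1 hI hA ν (δ := δ) h0 h1
  have hup := fun δ h0 h1 => M.eventually_risk_SR_le hH2 hI hA (δ := δ) h0 h1
  have c1 : ∀ ν : ℕ, Tendsto (fun β : ℝ =>
      M.risk ν (M.SR ((1 - alpha2 β (kstar β)) / (rho2 β * alpha2 β (kstar β))))
        / ENNReal.ofReal (|Real.log β| / I)) (𝓝[>] (0 : ℝ)) (𝓝 1) := by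
    intro ν
    refine tendsto_div_one_of_bounds hx (fun δ h0 h1 => ?_) (fun δ h0 h1 => ?_)
    · filter_upwards [hlow ν δ h0 h1, eventually_mem_Ioo] with β h2 hβ
      exact h2 _ (hmem β hβ)
    · filter_upwards [hup δ h0 h1] with β h2
      exact h2 ν
  have c2 : ∀ ν : ℕ, Tendsto (fun β : ℝ =>
      (⨅ τ ∈ M.Hclass β (kstar β) (mstar β), M.risk ν τ)
        / ENNReal.ofReal (|Real.log β| / I)) (𝓝[>] (0 : ℝ)) (𝓝 1) := by
    intro ν
    refine tendsto_div_one_of_bounds hx (fun δ h0 h1 => ?_) (fun δ h0 h1 => ?_)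
    · filter_upwards [hlow ν δ h0 h1] with β h2
      exact le_iInf₂ h2
    · filter_upwards [hup δ h0 h1, eventually_mem_Ioo] with β h2 hβ
      exact (iInf₂_le _ (hmem β hβ)).trans (h2 ν)
  have c3 : Tendsto (fun β : ℝ =>
      (⨆ ν : ℕ, M.risk ν (M.SR ((1 - alpha2 β (kstar β)) / (rho2 β * alpha2 β (kstar β)))))
        / ENNReal.ofReal (|Real.log β| / I)) (𝓝[>] (0 : ℝ)) (𝓝 1) := by
    refine tendsto_div_one_of_bounds hx (fun δ h0 h1 => ?_) (fun δ h0 h1 => ?_)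
    · filter_upwards [hlow 0 δ h0 h1, eventually_mem_Ioo] with β h2 hβ
      exact (h2 _ (hmem β hβ)).trans (le_iSup (fun ν : ℕ => M.risk ν _) 0)
    · filter_upwards [hup δ h0 h1] with β h2
      exact iSup_le h2
  have c4 : Tendsto (fun β : ℝ =>
      (⨅ τ ∈ M.Hclass β (kstar β) (mstar β), ⨆ ν : ℕ, M.risk ν τ)
        / ENNReal.ofReal (|Real.log β| / I)) (𝓝[>] (0 : ℝ)) (𝓝 1) := by
    refine tendsto_div_one_of_bounds hx (fun δ h0 h1 => ?_) (fun δ h0 h1 => ?_)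
    · filter_upwards [hlow 0 δ h0 h1] with β h2
      exact le_iInf₂ fun τ hτ => (h2 τ hτ).trans (le_iSup (fun ν : ℕ => M.risk ν τ) 0)
    · filter_upwards [hup δ h0 h1, eventually_mem_Ioo] with β h2 hβ
      exact (iInf₂_le _ (hmem β hβ)).trans (iSup_le h2)
  exact ⟨fun ν => tendsto_div_of_tendsto_div hx (c2 ν) (c1 ν),
    tendsto_div_of_tendsto_div hx c4 c3, c1, c2, c3, c4⟩
end
end

section
/- Assume conditions (B1) and (B2) hold. Then for any x ∈ X and any real r ≥ 2 for which υ*_r(x) < ∞ and g*_r(x) < ∞, one has for every n ≥ 2: E_x|W̃_n(g)|^r ≤ W*_r · (1 + υ*_r(x) + g*_r(x)) / n^{r/2}. -/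
/-!
The centred sum splits as `n W̃_n = A + B`, where `A = ∑ (g(X_{i+1}, X_i) - g̃(X_i))` is a
martingale and `B = ∑ (g̃(X_i) - λ(g̃))` is an additive functional of the chain. Both are handled by
one inequality of Rio (`rio_inequality`): if `Y_i` is adapted to `ℱ_i` and
`Y_j (Y_j + ∑_{j<i<l} E[Y_i | ℱ_j]) ≤ H_j²` for all `j, l`, with `E H_j^r ≤ η`, then
`E |∑_{i<n} Y_i|^r ≤ (2 (r-1) n)^{r/2} η`.

Rio's inequality comes from an integral inequality for the interpolated moment
`φ(n + t) = E |S_n + t Y_n|^r`, `0 ≤ t ≤ 1`. A second-order expansion of `|·|^r`, in which the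
first-order terms are themselves expanded as telescoping sums and conditioned on the past
(`moment_step`), bounds `φ` by `r (r-1) ∫ E[|S + s Y|^{r-2} H²] ds`; Hölder's inequality turns this
into `φ(u) ≤ r (r-1) η^{2/r} ∫_0^u φ^{1-2/r}`, and the Bihari–Gronwall lemma `gronwall_rpow`
integrates it, one unit interval at a time.

For `A` the conditional expectations vanish and `H_i = |Y_i|`. For `B` the Markov property
identifies `E[Y_i | ℱ_j]` with the integral of `g̃ - λ(g̃)` under the `(i-j)`-step kernel at `X_j`,
which geometric ergodicity bounds by `2 R V(X_j) e^{-κ(i-j)}`; summing the geometric series gives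
`H_j = 2 R √(e^κ / (e^κ - 1)) V(X_j)`. The hypothesis covers only functions with `0 < f ≤ V`;
splitting into positive and negative parts costs the factor `2`.

The two bounds are combined by convexity with weights `1/4` and `3/4`, and
`((r-1)/r)^{r/2} ≤ e^{-1/2}` makes the constants fit.
-/

open MeasureTheory ProbabilityTheory Filter Set ENNReal

noncomputable section

/-- A time-homogeneous Markov chain on a measurable space `𝒳`: a Markov transition kernel
`K` together with, for every starting point `x`, the law `law x` (on the path space
`ℕ → 𝒳`) of the chain started at `x`, characterized by `X 0 = x` a.s. and the Markov
property with transition kernel `K`. -/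
structure MarkovChain (𝒳 : Type) [MeasurableSpace 𝒳] where
  K : Kernel 𝒳 𝒳
  isMarkov : IsMarkovKernel K
  law : 𝒳 → Measure (ℕ → 𝒳)
  law_prob : ∀ x, IsProbabilityMeasure (law x)
  law_zero : ∀ x, law x {ω | ω 0 = x} = 1
  law_markov : ∀ (x : 𝒳) (n : ℕ) (A : Set 𝒳), MeasurableSet A →
    ∀ B : Set (ℕ → 𝒳),
      MeasurableSet[MeasurableSpace.comap
        (fun (ω : ℕ → 𝒳) (i : Fin (n + 1)) => ω i) inferInstance] B →
      law x ({ω | ω (n + 1) ∈ A} ∩ B) = ∫⁻ ω in B, K (ω n) A ∂(law x)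

namespace MarkovChain

variable {𝒳 : Type} [MeasurableSpace 𝒳] (M : MarkovChain 𝒳)

/-- `g̃(u) = ∫ g(v,u) P(u,dv)`. -/
def gtilde (g : 𝒳 → 𝒳 → ℝ) (u : 𝒳) : ℝ := ∫ v, g v u ∂(M.K u)

/-- `υ*_r(x) = sup_{n ≥ 0} E_x V(X_n)^r`. -/
def upsStar (V : 𝒳 → ℝ) (r : ℝ) (x : 𝒳) : ℝ≥0∞ :=
  ⨆ n : ℕ, ∫⁻ ω, ENNReal.ofReal (V (ω n) ^ r) ∂(M.law x)

/-- `g*_r(x) = sup_{j ≥ 1} E_x |g(X_j, X_{j-1})|^r`. -/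
def gStar (g : 𝒳 → 𝒳 → ℝ) (r : ℝ) (x : 𝒳) : ℝ≥0∞ :=
  ⨆ j : ℕ, ∫⁻ ω, ENNReal.ofReal (|g (ω (j + 1)) (ω j)| ^ r) ∂(M.law x)

end MarkovChain

/-! ### Second-order expansion of `|x|^r` and a nonlinear Gronwall inequality -/

/-- `x ↦ |x|^(r-2) x`, the derivative of `|x|^r` up to the factor `r`. -/
def signedPow (r x : ℝ) : ℝ := |x| ^ (r - 2) * x

/-- `∫₀ᵗ |x + s y|^(r-2) ds`, the averaged second derivative of `|·|^r` (up to the factor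
`r (r - 1)`) along the segment from `x` to `x + t y`. -/
def segInt (r x y t : ℝ) : ℝ := ∫ s in (0 : ℝ)..t, |x + s * y| ^ (r - 2)

lemma continuous_abs_rpow {p : ℝ} (hp : 0 ≤ p) : Continuous fun x : ℝ => |x| ^ p :=
  continuous_abs.rpow_const fun _ => Or.inr hp

lemma continuous_signedPow {r : ℝ} (hr : 2 ≤ r) : Continuous (signedPow r) :=
  (continuous_abs_rpow (by linarith)).mul continuous_id

lemma abs_signedPow {r : ℝ} (hr : 2 ≤ r) (x : ℝ) : |signedPow r x| = |x| ^ (r - 1) := by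
  unfold signedPow
  rw [abs_mul, abs_of_nonneg (by positivity : 0 ≤ |x| ^ (r - 2))]
  conv_lhs => rw [← Real.rpow_one |x|, Real.rpow_one |x|]
  rw [show r - 1 = (r - 2) + 1 by ring, Real.rpow_add_of_nonneg (abs_nonneg x) (by linarith)
    zero_le_one, Real.rpow_one]

lemma abs_rpow_eq_mul {r : ℝ} (hr : 2 ≤ r) (x : ℝ) : |x| ^ r = signedPow r x * x := by
  unfold signedPow
  rw [mul_assoc, ← abs_mul_abs_self x, ← pow_two, ← Real.rpow_natCast,
    ← Real.rpow_add_of_nonneg (abs_nonneg x) (by linarith) (by positivity)]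
  congr 1
  push_cast
  ring

lemma hasDerivAt_signedPow {r : ℝ} (hr : 2 ≤ r) (x : ℝ) :
    HasDerivAt (signedPow r) ((r - 1) * |x| ^ (r - 2)) x := by
  rcases lt_trichotomy x 0 with hx | hx | hx
  · have h : HasDerivAt (fun y : ℝ => -(-y) ^ (r - 1)) (-((-1) * (r - 1) * (-x) ^ (r - 1 - 1))) x :=
      ((hasDerivAt_neg x).rpow_const (Or.inl (by linarith))).neg
    refine (h.congr_of_eventuallyEq ?_).congr_deriv ?_
    · filter_upwards [gt_mem_nhds hx] with y hy
      unfold signedPow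
      rw [abs_of_neg hy, show r - 1 = (r - 2) + 1 by ring,
        Real.rpow_add_one (by linarith : -y ≠ 0)]
      ring
    · rw [abs_of_neg hx, show r - 1 - 1 = r - 2 by ring]
      ring
  · subst hx
    rcases hr.eq_or_lt with h2 | h2
    · subst h2
      have : signedPow 2 = id := by
        funext y
        simp [signedPow]
      rw [this]
      exact (hasDerivAt_id (0 : ℝ)).congr_deriv (by norm_num)
    · rw [hasDerivAt_iff_tendsto_slope]
      have h0 : (r - 1) * |(0 : ℝ)| ^ (r - 2) = |(0 : ℝ)| ^ (r - 2) := by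
        rw [abs_zero, Real.zero_rpow (by linarith)]
        simp
      rw [h0]
      have hc := ((continuous_abs_rpow (p := r - 2) (by linarith)).tendsto 0).mono_left
        (nhdsWithin_le_nhds (s := {0}ᶜ))
      refine hc.congr' ?_
      filter_upwards [self_mem_nhdsWithin] with y hy
      have hy : y ≠ 0 := hy
      simp only [slope_def_field, signedPow]
      field_simp
      simp
  · have h : HasDerivAt (fun y : ℝ => y ^ (r - 1)) (1 * (r - 1) * x ^ (r - 1 - 1)) x :=
      (hasDerivAt_id x).rpow_const (Or.inl hx.ne')
    refine (h.congr_of_eventuallyEq ?_).congr_deriv ?_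
    · filter_upwards [lt_mem_nhds hx] with y hy
      unfold signedPow
      rw [abs_of_pos hy, show r - 1 = (r - 2) + 1 by ring, Real.rpow_add_one hy.ne']
    · rw [abs_of_pos hx, show r - 1 - 1 = r - 2 by ring]
      ring

lemma signedPow_sub {r : ℝ} (hr : 2 ≤ r) (x y t : ℝ) :
    signedPow r (x + t * y) - signedPow r x = (r - 1) * y * segInt r x y t := by
  have h : ∀ s ∈ uIcc (0 : ℝ) t, HasDerivAt (fun s : ℝ => signedPow r (x + s * y))
      ((r - 1) * |x + s * y| ^ (r - 2) * y) s := by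
    intro s _
    have h1 : HasDerivAt (fun s : ℝ => x + s * y) y s := by
      simpa using ((hasDerivAt_id s).mul_const y).const_add x
    exact (hasDerivAt_signedPow hr (x + s * y)).comp s h1
  have hc : Continuous fun s : ℝ => (r - 1) * |x + s * y| ^ (r - 2) * y := by
    have := (continuous_abs_rpow (p := r - 2) (by linarith)).comp
      (by fun_prop : Continuous fun s : ℝ => x + s * y)
    exact (continuous_const.mul this).mul continuous_const
  have := intervalIntegral.integral_eq_sub_of_hasDerivAt h (hc.intervalIntegrable _ _)
  simp only [zero_mul, add_zero] at this
  rw [← this, segInt, intervalIntegral.integral_mul_const, intervalIntegral.integral_const_mul]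
  ring

lemma segInt_nonneg {r x y t : ℝ} (ht : 0 ≤ t) : 0 ≤ segInt r x y t :=
  intervalIntegral.integral_nonneg ht fun _ _ => by positivity

/-- The tangent-line inequality for the convex function `|·|^r`. -/
lemma abs_rpow_sub_le {r : ℝ} (hr : 2 ≤ r) (a b : ℝ) :
    |b| ^ r - |a| ^ r ≤ r * signedPow r b * (b - a) := by
  have hr0 : (0 : ℝ) < r := by linarith
  have h1 : |b| ^ (r - 1) * |a| ≤ ((r - 1) / r) * |b| ^ r + (1 / r) * |a| ^ r := by
    have := Real.geom_mean_le_arith_mean2_weighted (w₁ := (r - 1) / r) (w₂ := 1 / r)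
      (p₁ := |b| ^ r) (p₂ := |a| ^ r) (div_nonneg (by linarith) hr0.le) (by positivity)
      (by positivity) (by positivity) (by field_simp; ring)
    rw [← Real.rpow_mul (abs_nonneg _), ← Real.rpow_mul (abs_nonneg _)] at this
    rwa [mul_div_cancel₀ _ hr0.ne', mul_div_cancel₀ _ hr0.ne', Real.rpow_one] at this
  have h2 : signedPow r b * a ≤ |b| ^ (r - 1) * |a| := by
    rw [← abs_signedPow hr, ← abs_mul]
    exact le_abs_self _
  have h3 := abs_rpow_eq_mul hr b
  have h4 : r * (signedPow r b * a) ≤ (r - 1) * |b| ^ r + |a| ^ r := by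
    calc r * (signedPow r b * a) ≤ r * (((r - 1) / r) * |b| ^ r + (1 / r) * |a| ^ r) := by
          gcongr
          linarith
      _ = _ := by field_simp
  nlinarith

/-- Second-order bound for `|·|^r` with the remainder expressed through `segInt`. -/
lemma abs_rpow_taylor {r : ℝ} (hr : 2 ≤ r) (x y t : ℝ) :
    |x + t * y| ^ r ≤ |x| ^ r + r * t * (signedPow r x * y)
      + r * (r - 1) * t * (y ^ 2 * segInt r x y t) := by
  have h1 := abs_rpow_sub_le hr x (x + t * y)
  have h2 := signedPow_sub hr x y t
  have h3 : signedPow r (x + t * y) = signedPow r x + (r - 1) * y * segInt r x y t := by linarith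
  rw [h3] at h1
  nlinarith

/-- A Bihari–Gronwall inequality on the unit interval: the right-hand side of the integral
inequality is a primitive whose `(1 - α)`-th power has derivative at most `(1 - α) C`. -/
lemma gronwall_rpow {f : ℝ → ℝ} {α a C : ℝ} (hα0 : 0 ≤ α) (hα1 : α < 1) (ha : 0 ≤ a) (hC : 0 ≤ C)
    (hf : ContinuousOn f (Icc 0 1)) (hf0 : ∀ s, 0 ≤ f s)
    (h : ∀ s ∈ Icc (0 : ℝ) 1, f s ≤ a + C * ∫ u in (0 : ℝ)..s, f u ^ α) :
    (a + C * ∫ u in (0 : ℝ)..1, f u ^ α) ^ (1 - α) ≤ a ^ (1 - α) + (1 - α) * C := by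
  have hfα : ContinuousOn (fun u => f u ^ α) (Icc 0 1) := hf.rpow_const fun _ _ => Or.inr hα0
  have hint : IntervalIntegrable (fun u => f u ^ α) volume 0 1 := by
    apply ContinuousOn.intervalIntegrable
    rwa [uIcc_of_le zero_le_one]
  have hI0 : ∀ s, 0 ≤ s → 0 ≤ ∫ u in (0 : ℝ)..s, f u ^ α := fun s hs =>
    intervalIntegral.integral_nonneg hs fun u _ => Real.rpow_nonneg (hf0 u) _
  -- Perturbing `a` to `a + ε` keeps the primitive positive, so that its power is differentiable.
  have key : ∀ ε > 0, (a + C * ∫ u in (0 : ℝ)..1, f u ^ α) ^ (1 - α)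
      ≤ (a + ε) ^ (1 - α) + (1 - α) * C := by
    intro ε hε
    set Φ : ℝ → ℝ := fun s => (a + ε) + C * ∫ u in (0 : ℝ)..s, f u ^ α with hΦ
    have hpos : ∀ s, 0 ≤ s → 0 < Φ s := fun s hs => by
      have := mul_nonneg hC (hI0 s hs)
      simp only [hΦ]
      linarith
    have hΦc : ContinuousOn Φ (Icc 0 1) := by
      have := intervalIntegral.continuousOn_primitive_interval (μ := volume)
        (f := fun u => f u ^ α) (a := 0) (b := 1)
        (by rw [uIcc_of_le zero_le_one]; exact hfα.integrableOn_Icc)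
      rw [uIcc_of_le zero_le_one] at this
      exact continuousOn_const.add (continuousOn_const.mul this)
    have hder : ∀ s ∈ Ioo (0 : ℝ) 1, HasDerivAt (fun s => Φ s ^ (1 - α))
        ((C * f s ^ α) * (1 - α) * Φ s ^ (1 - α - 1)) s := by
      intro s hs
      have h1 : HasDerivAt (fun s => ∫ u in (0 : ℝ)..s, f u ^ α) (f s ^ α) s := by
        apply intervalIntegral.integral_hasDerivAt_right
        · apply hint.mono_set
          rw [uIcc_of_le zero_le_one, uIcc_of_le hs.1.le]
          exact Icc_subset_Icc le_rfl hs.2.le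
        · exact (hfα.mono Ioo_subset_Icc_self).stronglyMeasurableAtFilter isOpen_Ioo s hs
        · exact hfα.continuousAt (Icc_mem_nhds hs.1 hs.2)
      have h2 : HasDerivAt Φ (C * f s ^ α) s := (h1.const_mul C).const_add (a + ε)
      exact h2.rpow_const (Or.inl (hpos s hs.1.le).ne')
    have hmv := (convex_Icc (0 : ℝ) 1).image_sub_le_mul_sub_of_deriv_le
      (f := fun s => Φ s ^ (1 - α))
      (hΦc.rpow_const fun s hs => Or.inl (hpos s hs.1).ne')
      (by
        rw [interior_Icc]
        exact fun s hs => (hder s hs).differentiableAt.differentiableWithinAt)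
      (C := (1 - α) * C)
      (by
        rw [interior_Icc]
        intro s hs
        rw [(hder s hs).deriv]
        have hp := hpos s hs.1.le
        have h3 : f s ^ α ≤ Φ s ^ α := by
          apply Real.rpow_le_rpow (hf0 s) _ hα0
          have := h s ⟨hs.1.le, hs.2.le⟩
          simp only [hΦ]
          linarith
        have h4 : Φ s ^ α * Φ s ^ (1 - α - 1) = 1 := by
          rw [← Real.rpow_add hp]
          simp
        have h5 : 0 ≤ Φ s ^ (1 - α - 1) := Real.rpow_nonneg hp.le _
        calc C * f s ^ α * (1 - α) * Φ s ^ (1 - α - 1)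
            ≤ C * Φ s ^ α * (1 - α) * Φ s ^ (1 - α - 1) := by
              have : 0 ≤ 1 - α := by linarith
              gcongr
          _ = (1 - α) * C * (Φ s ^ α * Φ s ^ (1 - α - 1)) := by ring
          _ = (1 - α) * C := by rw [h4, mul_one])
      0 ⟨le_rfl, zero_le_one⟩ 1 ⟨zero_le_one, le_rfl⟩ zero_le_one
    have hΦ0 : Φ 0 = a + ε := by simp [hΦ]
    simp only [hΦ0, sub_zero, mul_one] at hmv
    have hle : (a + C * ∫ u in (0 : ℝ)..1, f u ^ α) ^ (1 - α) ≤ Φ 1 ^ (1 - α) := by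
      have := mul_nonneg hC (hI0 1 zero_le_one)
      apply Real.rpow_le_rpow (by linarith) _ (by linarith)
      simp only [hΦ]
      linarith
    linarith
  have hlim : Tendsto (fun ε : ℝ => (a + ε) ^ (1 - α) + (1 - α) * C) (nhdsWithin 0 (Ioi 0))
      (nhds (a ^ (1 - α) + (1 - α) * C)) := by
    have hc : Continuous fun ε : ℝ => (a + ε) ^ (1 - α) + (1 - α) * C :=
      ((continuous_const.add continuous_id).rpow_const fun _ => Or.inr (by linarith)).add
        continuous_const
    have := (hc.tendsto 0).mono_left (nhdsWithin_le_nhds (s := Ioi 0))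
    simpa using this
  refine ge_of_tendsto hlim ?_
  filter_upwards [self_mem_nhdsWithin] with ε hε using key ε hε

/-! ### Moments along a segment -/

lemma rpow_mul_rpow_le_add {a b p r : ℝ} (ha : 0 ≤ a) (hb : 0 ≤ b) (hp : 0 ≤ p) (hpr : p ≤ r) :
    a ^ p * b ^ (r - p) ≤ a ^ r + b ^ r := by
  have hrp : 0 ≤ r - p := by linarith
  have ha' := Real.rpow_nonneg ha r
  have hb' := Real.rpow_nonneg hb r
  rcases le_total a b with h | h
  · calc a ^ p * b ^ (r - p) ≤ b ^ p * b ^ (r - p) := by gcongr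
      _ = b ^ r := by rw [← Real.rpow_add_of_nonneg hb hp hrp]; congr 1; ring
      _ ≤ _ := by linarith
  · calc a ^ p * b ^ (r - p) ≤ a ^ p * a ^ (r - p) := by gcongr
      _ = a ^ r := by rw [← Real.rpow_add_of_nonneg ha hp hrp]; congr 1; ring
      _ ≤ _ := by linarith

/-- Convexity of `x ↦ x^r` applied to the mean of `a / θ` and `b / (1 - θ)` with weights
`θ` and `1 - θ`. -/
lemma add_rpow_le_weighted {a b r θ : ℝ} (ha : 0 ≤ a) (hb : 0 ≤ b) (hr : 1 ≤ r) (hθ0 : 0 < θ)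
    (hθ1 : θ < 1) :
    (a + b) ^ r ≤ θ ^ (1 - r) * a ^ r + (1 - θ) ^ (1 - r) * b ^ r := by
  have h1 : 0 < 1 - θ := by linarith
  have h := (convexOn_rpow hr).2 (x := a / θ) (y := b / (1 - θ)) (mem_Ici.2 (by positivity))
    (mem_Ici.2 (by positivity)) hθ0.le h1.le (by ring)
  simp only [smul_eq_mul] at h
  rw [mul_div_cancel₀ _ hθ0.ne', mul_div_cancel₀ _ h1.ne', Real.div_rpow ha hθ0.le,
    Real.div_rpow hb h1.le] at h
  rw [Real.rpow_sub hθ0, Real.rpow_sub h1, Real.rpow_one, Real.rpow_one]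
  calc (a + b) ^ r ≤ _ := h
    _ = _ := by ring

lemma abs_add_mul_le {x y s : ℝ} (hs : s ∈ Icc (0 : ℝ) 1) : |x + s * y| ≤ |x| + |y| := by
  have h : |s * y| ≤ |y| := by
    rw [abs_mul, abs_of_nonneg hs.1]
    exact mul_le_of_le_one_left (abs_nonneg _) hs.2
  linarith [abs_add_le x (s * y)]

section Moments

variable {Ω : Type*} {m0 : MeasurableSpace Ω} {μ : Measure Ω} {r : ℝ}

lemma integrable_abs_add_abs_rpow (hr : 2 ≤ r) {X Y : Ω → ℝ} (hX : Measurable X) (hY : Measurable Y)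
    (hXr : Integrable (fun ω => |X ω| ^ r) μ) (hYr : Integrable (fun ω => |Y ω| ^ r) μ) :
    Integrable (fun ω => (|X ω| + |Y ω|) ^ r) μ := by
  refine ((hXr.const_mul ((1 / 2 : ℝ) ^ (1 - r))).add
    (hYr.const_mul ((1 - 1 / 2 : ℝ) ^ (1 - r)))).mono' ?_ ?_
  · exact ((hX.abs.add hY.abs).pow_const r).aestronglyMeasurable
  · refine Eventually.of_forall fun ω => ?_
    rw [Real.norm_of_nonneg (by positivity)]
    exact add_rpow_le_weighted (abs_nonneg _) (abs_nonneg _) (by linarith) (by norm_num)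
      (by norm_num)

lemma integrable_abs_add_rpow (hr : 2 ≤ r) {X Y : Ω → ℝ} (hX : Measurable X) (hY : Measurable Y)
    (hXr : Integrable (fun ω => |X ω| ^ r) μ) (hYr : Integrable (fun ω => |Y ω| ^ r) μ)
    {s : ℝ} (hs : s ∈ Icc (0 : ℝ) 1) :
    Integrable (fun ω => |X ω + s * Y ω| ^ r) μ := by
  refine (integrable_abs_add_abs_rpow hr hX hY hXr hYr).mono' ?_ ?_
  · exact ((hX.add (hY.const_mul s)).abs.pow_const r).aestronglyMeasurable
  · refine Eventually.of_forall fun ω => ?_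
    rw [Real.norm_of_nonneg (by positivity)]
    gcongr
    exact abs_add_mul_le hs

lemma continuousOn_moment (hr : 2 ≤ r) {X Y : Ω → ℝ} (hX : Measurable X) (hY : Measurable Y)
    (hXr : Integrable (fun ω => |X ω| ^ r) μ) (hYr : Integrable (fun ω => |Y ω| ^ r) μ) :
    ContinuousOn (fun s : ℝ => ∫ ω, |X ω + s * Y ω| ^ r ∂μ) (Icc 0 1) := by
  refine continuousOn_of_dominated (bound := fun ω => (|X ω| + |Y ω|) ^ r) ?_ ?_
    (integrable_abs_add_abs_rpow hr hX hY hXr hYr) ?_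
  · intro s _
    exact ((hX.add (hY.const_mul s)).abs.pow_const r).aestronglyMeasurable
  · intro s hs
    refine Eventually.of_forall fun ω => ?_
    rw [Real.norm_of_nonneg (by positivity)]
    gcongr
    exact abs_add_mul_le hs
  · refine Eventually.of_forall fun ω => Continuous.continuousOn ?_
    exact (continuous_abs_rpow (by linarith : 0 ≤ r)).comp
      (by fun_prop : Continuous fun s : ℝ => X ω + s * Y ω)

/-- Hölder's inequality with exponents `r/(r-2)` and `r/2`; the case `r = 2` is included. -/
lemma holder_moment (hr : 2 ≤ r) {Z H : Ω → ℝ} (hZ : Measurable Z) (hH : Measurable H)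
    (hH0 : ∀ ω, 0 ≤ H ω)
    (hZr : Integrable (fun ω => |Z ω| ^ r) μ) (hHr : Integrable (fun ω => H ω ^ r) μ) :
    Integrable (fun ω => |Z ω| ^ (r - 2) * H ω ^ 2) μ ∧
    ∫ ω, |Z ω| ^ (r - 2) * H ω ^ 2 ∂μ
      ≤ (∫ ω, |Z ω| ^ r ∂μ) ^ (1 - 2 / r) * (∫ ω, H ω ^ r ∂μ) ^ (2 / r) := by
  have hr0 : 0 < r := by linarith
  have hq : 2 / r ≤ 1 := (div_le_one hr0).2 hr
  have hint : Integrable (fun ω => |Z ω| ^ (r - 2) * H ω ^ 2) μ := by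
    refine (hZr.add hHr).mono' ((hZ.abs.pow_const _).mul (hH.pow_const 2)).aestronglyMeasurable ?_
    refine Eventually.of_forall fun ω => ?_
    rw [Real.norm_of_nonneg (by have := hH0 ω; positivity)]
    have := rpow_mul_rpow_le_add (abs_nonneg (Z ω)) (hH0 ω) (by linarith : 0 ≤ r - 2)
      (by linarith : r - 2 ≤ r)
    rw [show r - (r - 2) = 2 by ring] at this
    simpa using this
  refine ⟨hint, ?_⟩
  have hZi : 0 ≤ ∫ ω, |Z ω| ^ r ∂μ := integral_nonneg fun ω => by positivity
  have hHi : 0 ≤ ∫ ω, H ω ^ r ∂μ := integral_nonneg fun ω => Real.rpow_nonneg (hH0 ω) _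
  rw [← ENNReal.ofReal_le_ofReal_iff (by positivity),
    ofReal_integral_eq_lintegral_ofReal hint
      (Eventually.of_forall fun ω => by have := hH0 ω; simp only [Pi.zero_apply]; positivity),
    ENNReal.ofReal_mul (by positivity), ← ENNReal.ofReal_rpow_of_nonneg hZi (by linarith),
    ← ENNReal.ofReal_rpow_of_nonneg hHi (by positivity),
    ofReal_integral_eq_lintegral_ofReal hZr
      (Eventually.of_forall fun ω => by simp only [Pi.zero_apply]; positivity),
    ofReal_integral_eq_lintegral_ofReal hHr
      (Eventually.of_forall fun ω => Real.rpow_nonneg (hH0 ω) _)]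
  refine le_trans (le_of_eq ?_) (ENNReal.lintegral_mul_norm_pow_le
    (hZ.abs.pow_const r).ennreal_ofReal.aemeasurable (hH.pow_const r).ennreal_ofReal.aemeasurable
    (by linarith : 0 ≤ 1 - 2 / r) (by positivity : 0 ≤ 2 / r) (by ring))
  refine lintegral_congr fun ω => ?_
  have h0 := hH0 ω
  rw [ENNReal.ofReal_mul (by positivity), ENNReal.ofReal_rpow_of_nonneg (by positivity)
    (by linarith), ENNReal.ofReal_rpow_of_nonneg (by positivity) (by positivity),
    ← Real.rpow_mul (abs_nonneg _), ← Real.rpow_mul h0, mul_div_cancel₀ _ hr0.ne',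
    show r * (1 - 2 / r) = r - 2 by field_simp]
  norm_num

/-- Fubini followed by Hölder for the averaged second derivative of `|·|^r`. -/
lemma segInt_moment [IsFiniteMeasure μ] (hr : 2 ≤ r) {X Y H : Ω → ℝ} (hX : Measurable X)
    (hY : Measurable Y) (hH : Measurable H) (hH0 : ∀ ω, 0 ≤ H ω)
    (hXr : Integrable (fun ω => |X ω| ^ r) μ) (hYr : Integrable (fun ω => |Y ω| ^ r) μ)
    (hHr : Integrable (fun ω => H ω ^ r) μ) {η : ℝ} (hη : ∫ ω, H ω ^ r ∂μ ≤ η)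
    {t : ℝ} (ht : t ∈ Icc (0 : ℝ) 1) :
    Integrable (fun ω => segInt r (X ω) (Y ω) t * H ω ^ 2) μ ∧
    ∫ ω, segInt r (X ω) (Y ω) t * H ω ^ 2 ∂μ
      ≤ η ^ (2 / r) * ∫ s in (0 : ℝ)..t, (∫ ω, |X ω + s * Y ω| ^ r ∂μ) ^ (1 - 2 / r) := by
  have hr0 : 0 < r := by linarith
  have hq : 2 / r ≤ 1 := (div_le_one hr0).2 hr
  set F : ℝ → Ω → ℝ := fun s ω => |X ω + s * Y ω| ^ (r - 2) * H ω ^ 2 with hF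
  have hFm : Measurable (Function.uncurry F) := by
    have h1 : Measurable fun p : ℝ × Ω => X p.2 + p.1 * Y p.2 :=
      (hX.comp measurable_snd).add (measurable_fst.mul (hY.comp measurable_snd))
    exact (h1.abs.pow_const _).mul ((hH.comp measurable_snd).pow_const 2)
  have hFi : Integrable (Function.uncurry F) ((volume.restrict (uIoc 0 t)).prod μ) := by
    have hb : Integrable (fun p : ℝ × Ω => (1 : ℝ) * ((|X p.2| + |Y p.2|) ^ r + H p.2 ^ r))
        ((volume.restrict (uIoc 0 t)).prod μ) := by
      refine Integrable.mul_prod (f := fun _ => (1 : ℝ)) ?_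
        ((integrable_abs_add_abs_rpow hr hX hY hXr hYr).add hHr)
      have : IsFiniteMeasure (volume.restrict (uIoc (0 : ℝ) t)) := by
        rw [uIoc_of_le ht.1]
        infer_instance
      exact integrable_const _
    refine hb.mono' hFm.aestronglyMeasurable ?_
    have : ∀ᵐ s ∂(volume.restrict (uIoc (0 : ℝ) t)), s ∈ uIoc (0 : ℝ) t :=
      ae_restrict_mem measurableSet_uIoc
    have h2 : ∀ᵐ p ∂((volume.restrict (uIoc (0 : ℝ) t)).prod μ), p.1 ∈ uIoc (0 : ℝ) t :=
      Measure.quasiMeasurePreserving_fst.ae this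
    filter_upwards [h2] with p hp
    rw [uIoc_of_le ht.1] at hp
    have h0 := hH0 p.2
    simp only [Function.uncurry, hF]
    rw [Real.norm_of_nonneg (by positivity), one_mul]
    have h3 : |X p.2 + p.1 * Y p.2| ≤ |X p.2| + |Y p.2| :=
      abs_add_mul_le ⟨hp.1.le, hp.2.trans ht.2⟩
    have := rpow_mul_rpow_le_add (by positivity : 0 ≤ |X p.2| + |Y p.2|) h0
      (by linarith : 0 ≤ r - 2) (by linarith : r - 2 ≤ r)
    rw [show r - (r - 2) = 2 by ring] at this
    refine le_trans ?_ (by simpa using this)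
    gcongr
  have hseg : ∀ ω, segInt r (X ω) (Y ω) t * H ω ^ 2 = ∫ s in (0 : ℝ)..t, F s ω := by
    intro ω
    rw [segInt, ← intervalIntegral.integral_mul_const]
  simp only [hseg]
  constructor
  · have := hFi.integral_prod_right
    simpa only [intervalIntegral.integral_of_le ht.1, uIoc_of_le ht.1, Function.uncurry] using this
  · rw [← intervalIntegral_integral_swap hFi, ← intervalIntegral.integral_const_mul]
    have hle : ∀ s ∈ Icc (0 : ℝ) t, ∫ ω, F s ω ∂μ
        ≤ η ^ (2 / r) * (∫ ω, |X ω + s * Y ω| ^ r ∂μ) ^ (1 - 2 / r) := by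
      intro s hs
      have hs' : s ∈ Icc (0 : ℝ) 1 := ⟨hs.1, hs.2.trans ht.2⟩
      refine (holder_moment hr (hX.add (hY.const_mul s)) hH hH0
        (integrable_abs_add_rpow hr hX hY hXr hYr hs') hHr).2.trans ?_
      rw [mul_comm]
      have : 0 ≤ ∫ ω, H ω ^ r ∂μ := integral_nonneg fun ω => Real.rpow_nonneg (hH0 ω) _
      have h2 : 0 ≤ (∫ ω, |X ω + s * Y ω| ^ r ∂μ) ^ (1 - 2 / r) :=
        Real.rpow_nonneg (integral_nonneg fun ω => by positivity) _
      exact mul_le_mul_of_nonneg_right (Real.rpow_le_rpow this hη (by positivity)) h2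
    refine intervalIntegral.integral_mono_on ht.1 ?_ ?_ hle
    · rw [intervalIntegrable_iff]
      exact hFi.integral_prod_left
    · apply ContinuousOn.intervalIntegrable
      rw [uIcc_of_le ht.1]
      refine continuousOn_const.mul (ContinuousOn.rpow_const ?_ fun _ _ => Or.inr (by linarith))
      exact (continuousOn_moment hr hX hY hXr hYr).mono (Icc_subset_Icc le_rfl ht.2)

end Moments

/-! ### Rio's moment inequality -/

section Rio

variable {Ω : Type*} {m0 : MeasurableSpace Ω} {μ : Measure Ω} {r : ℝ}

/-- The partial sum `Y 0 + ⋯ + Y (n - 1)`. -/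
def partialSum (Y : ℕ → Ω → ℝ) (n : ℕ) (ω : Ω) : ℝ := ∑ i ∈ Finset.range n, Y i ω

lemma partialSum_succ (Y : ℕ → Ω → ℝ) (n : ℕ) (ω : Ω) :
    partialSum Y (n + 1) ω = partialSum Y n ω + Y n ω := Finset.sum_range_succ _ _

lemma measurable_partialSum {Y : ℕ → Ω → ℝ} (hY : ∀ i, Measurable (Y i)) (n : ℕ) :
    Measurable (partialSum Y n) := Finset.measurable_fun_sum _ fun i _ => hY i

lemma integrable_partialSum (hr : 2 ≤ r) {Y : ℕ → Ω → ℝ} (hY : ∀ i, Measurable (Y i))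
    (hYr : ∀ i, Integrable (fun ω => |Y i ω| ^ r) μ) (n : ℕ) :
    Integrable (fun ω => |partialSum Y n ω| ^ r) μ := by
  induction n with
  | zero => simp [partialSum, Real.zero_rpow (by linarith : r ≠ 0)]
  | succ n ih =>
    have := integrable_abs_add_rpow hr (measurable_partialSum hY n) (hY n) ih (hYr n)
      (s := 1) ⟨zero_le_one, le_rfl⟩
    simpa only [partialSum_succ, one_mul] using this

lemma integrable_signedPow_mul (hr : 2 ≤ r) {X Y : Ω → ℝ} (hX : Measurable X) (hY : Measurable Y)
    (hXr : Integrable (fun ω => |X ω| ^ r) μ) (hYr : Integrable (fun ω => |Y ω| ^ r) μ) :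
    Integrable (fun ω => signedPow r (X ω) * Y ω) μ := by
  refine (hXr.add hYr).mono'
    (((continuous_signedPow hr).measurable.comp hX).mul hY).aestronglyMeasurable ?_
  refine Eventually.of_forall fun ω => ?_
  rw [Real.norm_eq_abs, abs_mul, abs_signedPow hr]
  have := rpow_mul_rpow_le_add (abs_nonneg (X ω)) (abs_nonneg (Y ω)) (by linarith : 0 ≤ r - 1)
    (by linarith : r - 1 ≤ r)
  rwa [show r - (r - 1) = 1 by ring, Real.rpow_one] at this

/-- Expanding `|S_n + t Y_n|^r` to second order, and then the first-order terms
`signedPow (S_i) Y_i` once more as a telescoping sum over `j < i`, leaves only terms of the form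
(averaged second derivative at step `j`) times `Y_j (Y_j + ∑_{i > j} E[Y_i | ℱ_j])`. -/
lemma moment_step [IsProbabilityMeasure μ] (ℱ : Filtration ℕ m0) (hr : 2 ≤ r) {Y : ℕ → Ω → ℝ}
    (hY : ∀ i, StronglyMeasurable[ℱ i] (Y i)) (hYr : ∀ i, Integrable (fun ω => |Y i ω| ^ r) μ)
    (T : ℕ → ℕ → Ω → ℝ) (hT : ∀ j i, j < i → μ[Y i | ℱ j] =ᵐ[μ] T j i)
    {H : ℕ → Ω → ℝ} (hH : ∀ i, Measurable (H i)) (hH0 : ∀ i ω, 0 ≤ H i ω)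
    (hHr : ∀ i, Integrable (fun ω => H i ω ^ r) μ)
    (hYT : ∀ j l, ∀ᵐ ω ∂μ, Y j ω ^ 2 + Y j ω * ∑ i ∈ Finset.Ioo j l, T j i ω ≤ H j ω ^ 2)
    (n : ℕ) {t : ℝ} (ht : t ∈ Icc (0 : ℝ) 1) :
    ∫ ω, |partialSum Y n ω + t * Y n ω| ^ r ∂μ
      ≤ r * (r - 1) * (∑ j ∈ Finset.range n,
          ∫ ω, segInt r (partialSum Y j ω) (Y j ω) 1 * H j ω ^ 2 ∂μ
        + ∫ ω, segInt r (partialSum Y n ω) (Y n ω) t * H n ω ^ 2 ∂μ) := by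
  have hYm : ∀ i, Measurable (Y i) := fun i => ((hY i).mono (ℱ.le i)).measurable
  have hSm := measurable_partialSum hYm
  have hSr := integrable_partialSum hr hYm hYr
  have h1mem : (1 : ℝ) ∈ Icc (0 : ℝ) 1 := ⟨zero_le_one, le_rfl⟩
  have hYi : ∀ i, Integrable (Y i) μ := fun i => by
    refine ((integrable_const (1 : ℝ)).add (hYr i)).mono' (hYm i).aestronglyMeasurable ?_
    refine Eventually.of_forall fun ω => ?_
    have := rpow_mul_rpow_le_add (r := r) (p := 1) (abs_nonneg (Y i ω)) zero_le_one zero_le_one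
      (by linarith)
    simp only [Real.rpow_one, Real.one_rpow, mul_one] at this
    simp only [Real.norm_eq_abs, Pi.add_apply]
    linarith
  -- `I j t` is the averaged second derivative at step `j`, `D j` the increment of `signedPow`.
  set I : ℕ → ℝ → Ω → ℝ := fun j t ω => segInt r (partialSum Y j ω) (Y j ω) t with hI
  set D : ℕ → Ω → ℝ := fun j ω =>
    signedPow r (partialSum Y (j + 1) ω) - signedPow r (partialSum Y j ω) with hD
  have hDI : ∀ j ω, D j ω = (r - 1) * Y j ω * I j 1 ω := by
    intro j ω
    simp only [hD, hI, partialSum_succ]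
    rw [← signedPow_sub hr, one_mul]
  have hI0 : ∀ j t ω, 0 ≤ t → 0 ≤ I j t ω := fun j t ω ht => segInt_nonneg ht
  have hIH : ∀ j, ∀ t ∈ Icc (0 : ℝ) 1, Integrable (fun ω => I j t ω * H j ω ^ 2) μ :=
    fun j t ht => (segInt_moment hr (hSm j) (hYm j) (hH j) (hH0 j) (hSr j) (hYr j) (hHr j)
      le_rfl ht).1
  have hIY : ∀ j, ∀ t ∈ Icc (0 : ℝ) 1, Integrable (fun ω => Y j ω ^ 2 * I j t ω) μ := by
    intro j t ht
    have := (segInt_moment hr (hSm j) (hYm j) (hYm j).abs (fun ω => abs_nonneg _) (hSr j) (hYr j)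
      (hYr j) le_rfl ht).1
    simpa only [sq_abs, mul_comm] using this
  have hSY : ∀ i k, Integrable (fun ω => signedPow r (partialSum Y i ω) * Y k ω) μ :=
    fun i k => integrable_signedPow_mul hr (hSm i) (hYm k) (hSr i) (hYr k)
  have hDY : ∀ j i, Integrable (D j * Y i) μ := by
    intro j i
    have := (hSY (j + 1) i).sub (hSY j i)
    refine this.congr (Eventually.of_forall fun ω => ?_)
    simp only [hD, Pi.mul_apply, Pi.sub_apply]
    ring
  have hDm : ∀ j, StronglyMeasurable[ℱ j] (D j) := by
    intro j
    have hS : ∀ k, k ≤ j + 1 → StronglyMeasurable[ℱ j] (partialSum Y k) := by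
      intro k hk
      refine Finset.stronglyMeasurable_fun_sum _ fun i hi => ?_
      exact (hY i).mono (ℱ.mono (by have := Finset.mem_range.1 hi; omega))
    exact ((continuous_signedPow hr).comp_stronglyMeasurable (hS _ le_rfl)).sub
      ((continuous_signedPow hr).comp_stronglyMeasurable (hS _ (by omega)))
  have hpull : ∀ j i, j < i → μ[D j * Y i | ℱ j] =ᵐ[μ] D j * T j i := by
    intro j i hji
    filter_upwards [condExp_mul_of_stronglyMeasurable_left (hDm j) (hDY j i) (hYi i), hT j i hji]
      with ω h1 h2
    rw [h1, Pi.mul_apply, Pi.mul_apply, h2]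
  have hDT : ∀ j i, j < i → Integrable (D j * T j i) μ := fun j i hji =>
    integrable_condExp.congr (hpull j i hji)
  have hEDT : ∀ j i, j < i → ∫ ω, D j ω * Y i ω ∂μ = ∫ ω, D j ω * T j i ω ∂μ := by
    intro j i hji
    have h1 := integral_condExp (μ := μ) (f := D j * Y i) (ℱ.le j)
    rw [integral_congr_ae (hpull j i hji)] at h1
    exact h1.symm
  set e : ℕ → ℕ → ℝ := fun j i => ∫ ω, D j ω * T j i ω ∂μ with he
  have hESY : ∀ i, ∫ ω, signedPow r (partialSum Y i ω) * Y i ω ∂μ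
      = ∑ j ∈ Finset.range i, e j i := by
    intro i
    have h1 : ∀ ω, signedPow r (partialSum Y i ω) * Y i ω
        = ∑ j ∈ Finset.range i, (D j * Y i) ω := by
      intro ω
      simp only [Pi.mul_apply]
      rw [← Finset.sum_mul, Finset.sum_range_sub (fun j => signedPow r (partialSum Y j ω))]
      simp [partialSum, signedPow]
    simp only [h1]
    rw [integral_finsetSum _ fun j _ => hDY j i]
    exact Finset.sum_congr rfl fun j hj => hEDT j i (Finset.mem_range.1 hj)
  have hstep : ∀ n, ∀ t ∈ Icc (0 : ℝ) 1, ∫ ω, |partialSum Y n ω + t * Y n ω| ^ r ∂μ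
      ≤ ∫ ω, |partialSum Y n ω| ^ r ∂μ + r * t * ∑ j ∈ Finset.range n, e j n
        + r * (r - 1) * t * ∫ ω, Y n ω ^ 2 * I n t ω ∂μ := by
    intro n t ht
    have hadd : Integrable (fun ω => |partialSum Y n ω| ^ r
        + r * t * (signedPow r (partialSum Y n ω) * Y n ω)) μ := (hSr n).add ((hSY n n).const_mul _)
    rw [← hESY, ← integral_const_mul, ← integral_const_mul, ← integral_add (hSr n)
      ((hSY n n).const_mul _), ← integral_add hadd ((hIY n t ht).const_mul _)]
    refine integral_mono (integrable_abs_add_rpow hr (hSm n) (hYm n) (hSr n) (hYr n) ht)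
      (hadd.add ((hIY n t ht).const_mul _)) fun ω => ?_
    exact abs_rpow_taylor hr _ _ _
  have hsum : ∀ n, ∫ ω, |partialSum Y n ω| ^ r ∂μ
      ≤ ∑ i ∈ Finset.range n, (r * ∑ j ∈ Finset.range i, e j i
        + r * (r - 1) * ∫ ω, Y i ω ^ 2 * I i 1 ω ∂μ) := by
    intro n
    induction n with
    | zero => simp [partialSum, Real.zero_rpow (by linarith : r ≠ 0)]
    | succ n ih =>
      rw [Finset.sum_range_succ]
      have := hstep n 1 h1mem
      simp only [mul_one, one_mul, ← partialSum_succ] at this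
      linarith
  have hQ : ∀ j l, (r - 1) * ∫ ω, Y j ω ^ 2 * I j 1 ω ∂μ + ∑ i ∈ Finset.Ioo j l, e j i
      ≤ (r - 1) * ∫ ω, I j 1 ω * H j ω ^ 2 ∂μ := by
    intro j l
    have hi : ∀ i ∈ Finset.Ioo j l, Integrable (fun ω => D j ω * T j i ω) μ := fun i hi =>
      hDT j i (Finset.mem_Ioo.1 hi).1
    simp only [he]
    rw [← integral_const_mul, ← integral_const_mul, ← integral_finsetSum _ hi, ← integral_add
      ((hIY j 1 h1mem).const_mul _) (integrable_finsetSum _ hi)]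
    refine integral_mono_ae (((hIY j 1 h1mem).const_mul _).add (integrable_finsetSum _ hi))
      ((hIH j 1 h1mem).const_mul _) ?_
    filter_upwards [hYT j l] with ω hω
    rw [← Finset.mul_sum, hDI]
    have h1 : 0 ≤ (r - 1) * I j 1 ω := mul_nonneg (by linarith) (hI0 _ _ _ zero_le_one)
    have h2 := mul_le_mul_of_nonneg_left hω h1
    calc _ = (r - 1) * I j 1 ω * (Y j ω ^ 2 + Y j ω * ∑ i ∈ Finset.Ioo j l, T j i ω) := by ring
      _ ≤ _ := h2
      _ = _ := by ring
  have hlast : t * ∫ ω, Y n ω ^ 2 * I n t ω ∂μ ≤ ∫ ω, I n t ω * H n ω ^ 2 ∂μ := by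
    have h0 : 0 ≤ ∫ ω, Y n ω ^ 2 * I n t ω ∂μ :=
      integral_nonneg fun ω => mul_nonneg (sq_nonneg _) (hI0 _ _ _ ht.1)
    refine (mul_le_of_le_one_left h0 ht.2).trans ?_
    refine integral_mono_ae (hIY n t ht) (hIH n t ht) ?_
    filter_upwards [hYT n 0] with ω hω
    rw [Finset.Ioo_eq_empty (by omega), Finset.sum_empty, mul_zero, add_zero] at hω
    rw [mul_comm]
    exact mul_le_mul_of_nonneg_left hω (hI0 _ _ _ ht.1)
  have hswap : ∑ i ∈ Finset.range n, ∑ j ∈ Finset.range i, e j i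
      = ∑ j ∈ Finset.range n, ∑ i ∈ Finset.Ioo j n, e j i := by
    refine Finset.sum_comm' fun i j => ?_
    simp only [Finset.mem_range, Finset.mem_Ioo]
    omega
  -- The sum over `i` stops at the fractional time `n + t`: interpolate between `l = n`, `l = n + 1`.
  have hcomb : ∀ j ∈ Finset.range n, (r - 1) * ∫ ω, Y j ω ^ 2 * I j 1 ω ∂μ
      + (∑ i ∈ Finset.Ioo j n, e j i + t * e j n) ≤ (r - 1) * ∫ ω, I j 1 ω * H j ω ^ 2 ∂μ := by
    intro j hj
    have h1 := hQ j n
    have h2 := hQ j (n + 1)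
    have h3 : ∑ i ∈ Finset.Ioo j (n + 1), e j i = ∑ i ∈ Finset.Ioo j n, e j i + e j n := by
      have : Finset.Ioo j (n + 1) = insert n (Finset.Ioo j n) := by
        ext i
        have := Finset.mem_range.1 hj
        simp only [Finset.mem_Ioo, Finset.mem_insert]
        omega
      rw [this, Finset.sum_insert (by simp)]
      ring
    rw [h3] at h2
    nlinarith [mul_le_mul_of_nonneg_left h1 (sub_nonneg.2 ht.2),
      mul_le_mul_of_nonneg_left h2 ht.1]
  have hfin := Finset.sum_le_sum hcomb
  simp only [Finset.sum_add_distrib, ← Finset.mul_sum] at hfin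
  have h1 := hstep n t ht
  have h2 := hsum n
  simp only [Finset.sum_add_distrib, ← Finset.mul_sum] at h2
  rw [hswap] at h2
  have hr0 : 0 ≤ r := by linarith
  have hr1 : 0 ≤ r * (r - 1) := mul_nonneg hr0 (by linarith)
  have h3 := mul_le_mul_of_nonneg_left hfin hr0
  have h4 := mul_le_mul_of_nonneg_left hlast hr1
  simp only [hI] at h1 h2 h3 h4 ⊢
  linarith

/-- **Rio's moment inequality**: if `Y_j (Y_j + ∑_{j<i<l} E[Y_i | ℱ_j]) ≤ H_j²` for all `l` and
`E H_j^r ≤ η`, then `E |Y_0 + ⋯ + Y_{n-1}|^r ≤ (2 (r - 1) n)^{r/2} η`. -/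
theorem rio_inequality [IsProbabilityMeasure μ] (ℱ : Filtration ℕ m0) (hr : 2 ≤ r) {Y : ℕ → Ω → ℝ}
    (hY : ∀ i, StronglyMeasurable[ℱ i] (Y i)) (hYr : ∀ i, Integrable (fun ω => |Y i ω| ^ r) μ)
    (T : ℕ → ℕ → Ω → ℝ) (hT : ∀ j i, j < i → μ[Y i | ℱ j] =ᵐ[μ] T j i)
    {H : ℕ → Ω → ℝ} (hH : ∀ i, Measurable (H i)) (hH0 : ∀ i ω, 0 ≤ H i ω)
    (hHr : ∀ i, Integrable (fun ω => H i ω ^ r) μ) {η : ℝ} (hη : ∀ i, ∫ ω, H i ω ^ r ∂μ ≤ η)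
    (hYT : ∀ j l, ∀ᵐ ω ∂μ, Y j ω ^ 2 + Y j ω * ∑ i ∈ Finset.Ioo j l, T j i ω ≤ H j ω ^ 2)
    (n : ℕ) :
    ∫ ω, |∑ i ∈ Finset.range n, Y i ω| ^ r ∂μ ≤ (2 * (r - 1) * n) ^ (r / 2) * η := by
  have hYm : ∀ i, Measurable (Y i) := fun i => ((hY i).mono (ℱ.le i)).measurable
  have hSm := measurable_partialSum hYm
  have hSr := integrable_partialSum hr hYm hYr
  have hr0 : 0 < r := by linarith
  have hr1 : 0 ≤ r - 1 := by linarith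
  have hq : 2 / r ≤ 1 := (div_le_one hr0).2 hr
  have hη0 : 0 ≤ η := le_trans (integral_nonneg fun ω => Real.rpow_nonneg (hH0 0 ω) _) (hη 0)
  set α : ℝ := 1 - 2 / r with hα
  have hα0 : 0 ≤ α := by linarith
  have hα1 : α < 1 := by
    have : 0 < 2 / r := by positivity
    linarith
  set m : ℕ → ℝ → ℝ := fun n s => ∫ ω, |partialSum Y n ω + s * Y n ω| ^ r ∂μ with hm
  have hm0 : ∀ n s, 0 ≤ m n s := fun n s => integral_nonneg fun ω => by positivity
  set C : ℝ := r * (r - 1) * η ^ (2 / r) with hC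
  have hC0 : 0 ≤ C := by positivity
  -- `A n` is the part of the integral bound accumulated up to time `n`.
  set A : ℕ → ℝ := fun n => ∑ j ∈ Finset.range n, C * ∫ s in (0 : ℝ)..1, m j s ^ α with hA
  have hA0 : ∀ n, 0 ≤ A n := fun n => Finset.sum_nonneg fun j _ => mul_nonneg hC0
    (intervalIntegral.integral_nonneg zero_le_one fun s _ => Real.rpow_nonneg (hm0 j s) _)
  have hseg : ∀ j, ∀ t ∈ Icc (0 : ℝ) 1,
      r * (r - 1) * ∫ ω, segInt r (partialSum Y j ω) (Y j ω) t * H j ω ^ 2 ∂μ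
        ≤ C * ∫ s in (0 : ℝ)..t, m j s ^ α := by
    intro j t ht
    rw [hC, mul_assoc (r * (r - 1))]
    exact mul_le_mul_of_nonneg_left (segInt_moment hr (hSm j) (hYm j) (hH j) (hH0 j) (hSr j)
      (hYr j) (hHr j) (hη j) ht).2 (by positivity)
  have hrec : ∀ n, ∀ t ∈ Icc (0 : ℝ) 1, m n t ≤ A n + C * ∫ s in (0 : ℝ)..t, m n s ^ α := by
    intro n t ht
    refine (moment_step ℱ hr hY hYr T hT hH hH0 hHr hYT n ht).trans ?_
    rw [mul_add, Finset.mul_sum]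
    exact add_le_add (Finset.sum_le_sum fun j _ => hseg j 1 ⟨zero_le_one, le_rfl⟩) (hseg n t ht)
  have hAn : ∀ n : ℕ, A n ^ (1 - α) ≤ n * ((1 - α) * C) := by
    intro n
    induction n with
    | zero => simp [hA, Real.zero_rpow (by linarith : 1 - α ≠ 0)]
    | succ n ih =>
      have := gronwall_rpow hα0 hα1 (hA0 n) hC0
        (continuousOn_moment hr (hSm n) (hYm n) (hSr n) (hYr n)) (hm0 n) (hrec n)
      have h2 : A (n + 1) = A n + C * ∫ s in (0 : ℝ)..1, m n s ^ α := Finset.sum_range_succ _ _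
      rw [h2]
      push_cast
      linarith
  have h1 : 1 - α = 2 / r := by rw [hα]; ring
  have h2 : (1 - α) * C = 2 * (r - 1) * η ^ (2 / r) := by
    rw [h1, hC]
    field_simp
  have h3 := hAn n
  rw [h2, h1] at h3
  have h4 : A n ≤ (2 * (r - 1) * n) ^ (r / 2) * η := by
    have h5 : (A n ^ (2 / r)) ^ (r / 2) ≤ (n * (2 * (r - 1) * η ^ (2 / r))) ^ (r / 2) :=
      Real.rpow_le_rpow (Real.rpow_nonneg (hA0 n) _) h3 (by positivity)
    have h6 : 2 / r * (r / 2) = 1 := by field_simp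
    rw [← Real.rpow_mul (hA0 n), h6, Real.rpow_one] at h5
    refine h5.trans (le_of_eq ?_)
    rw [show (n : ℝ) * (2 * (r - 1) * η ^ (2 / r)) = (2 * (r - 1) * n) * η ^ (2 / r) by ring,
      Real.mul_rpow (by positivity) (by positivity), ← Real.rpow_mul hη0, h6, Real.rpow_one]
  have h5 := hrec n 0 ⟨le_rfl, zero_le_one⟩
  simp only [hm, zero_mul, add_zero, intervalIntegral.integral_same, mul_zero] at h5
  exact h5.trans h4

end Rio

/-! ### Markov property and iterated kernels -/

namespace MarkovChain

variable {𝒳 : Type} [MeasurableSpace 𝒳] (M : MarkovChain 𝒳)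

instance instIsMarkovKernelK : IsMarkovKernel M.K := M.isMarkov

instance instIsProbabilityMeasureLaw (x : 𝒳) : IsProbabilityMeasure (M.law x) := M.law_prob x

/-- The natural filtration of the coordinate process: `filt 𝒳 n = σ(X_0, …, X_n)`. -/
def filt (𝒳 : Type) [MeasurableSpace 𝒳] :
    Filtration ℕ (inferInstance : MeasurableSpace (ℕ → 𝒳)) where
  seq n := MeasurableSpace.comap (fun (ω : ℕ → 𝒳) (i : Fin (n + 1)) => ω i) inferInstance
  mono' := by
    intro n m hnm
    rintro _ ⟨s, hs, rfl⟩
    have hmeas : Measurable fun (f : Fin (m + 1) → 𝒳) (i : Fin (n + 1)) =>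
        f ⟨i, i.2.trans_le (Nat.succ_le_succ hnm)⟩ :=
      measurable_pi_iff.2 fun i => measurable_pi_apply _
    exact ⟨_, hmeas hs, rfl⟩
  le' := by
    intro n
    refine Measurable.comap_le ?_
    exact measurable_pi_iff.2 fun i => measurable_pi_apply _

lemma measurable_coord {k n : ℕ} (h : k ≤ n) :
    Measurable[filt 𝒳 n] (fun ω : ℕ → 𝒳 => ω k) := by
  intro s hs
  exact ⟨_, measurable_pi_apply (⟨k, Nat.lt_succ_of_le h⟩ : Fin (n + 1)) hs, rfl⟩

/-- The Markov property in integrated form: on every event of the past, the pair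
`(X_n, X_{n+1})` has the law of `X_n` composed with the transition kernel. -/
lemma pair_law (x : 𝒳) (n : ℕ) {B : Set (ℕ → 𝒳)} (hB : MeasurableSet[filt 𝒳 n] B) :
    ((M.law x).restrict B).map (fun ω => (ω n, ω (n + 1)))
      = (((M.law x).restrict B).map (fun ω => ω n)) ⊗ₘ M.K := by
  have hc : ∀ k, Measurable fun ω : ℕ → 𝒳 => ω k := fun k => measurable_pi_apply k
  have : IsFiniteMeasure (((M.law x).restrict B).map (fun ω => (ω n, ω (n + 1)))) :=
    Measure.isFiniteMeasure_map _ _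
  refine Measure.ext_prod fun {s t} hs ht => ?_
  have hsn : MeasurableSet[filt 𝒳 n] ((fun ω : ℕ → 𝒳 => ω n) ⁻¹' s) :=
    measurable_coord le_rfl hs
  rw [Measure.compProd_apply_prod hs ht, setLIntegral_map hs (M.K.measurable_coe ht) (hc n),
    Measure.restrict_restrict (hc n hs), ← M.law_markov x n t ht _ (hsn.inter hB),
    Measure.map_apply ((hc n).prodMk (hc (n + 1))) (hs.prod ht),
    Measure.restrict_apply (((hc n).prodMk (hc (n + 1))) (hs.prod ht))]
  congr 1
  ext ω
  simp only [mem_inter_iff, mem_preimage, mem_prod, mem_ofPred_eq]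
  tauto

/-- The `k`-step transition kernel. -/
def kerPow : ℕ → Kernel 𝒳 𝒳
  | 0 => Kernel.id
  | k + 1 => M.K ∘ₖ kerPow k

instance instIsMarkovKernelKerPow (k : ℕ) : IsMarkovKernel (M.kerPow k) := by
  induction k with
  | zero => exact inferInstanceAs (IsMarkovKernel Kernel.id)
  | succ k ih => exact inferInstanceAs (IsMarkovKernel (M.K ∘ₖ M.kerPow k))

lemma map_law (x : 𝒳) (n k : ℕ) {B : Set (ℕ → 𝒳)} (hB : MeasurableSet[filt 𝒳 n] B) :
    ((M.law x).restrict B).map (fun ω => ω (n + k))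
      = M.kerPow k ∘ₘ ((M.law x).restrict B).map (fun ω => ω n) := by
  have hc : ∀ k, Measurable fun ω : ℕ → 𝒳 => ω k := fun k => measurable_pi_apply k
  induction k with
  | zero => exact (Measure.id_comp).symm
  | succ k ih =>
    have h1 := M.pair_law x (n + k) ((filt 𝒳).mono (Nat.le_add_right n k) B hB)
    have h2 := congrArg Measure.snd h1
    rw [Measure.snd_compProd, Measure.snd, Measure.map_map measurable_snd
      ((hc (n + k)).prodMk (hc (n + k + 1))), ih, Measure.comp_assoc] at h2
    exact h2

lemma pair_law_add (x : 𝒳) (n k : ℕ) {B : Set (ℕ → 𝒳)} (hB : MeasurableSet[filt 𝒳 n] B) :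
    ((M.law x).restrict B).map (fun ω => (ω n, ω (n + k)))
      = (((M.law x).restrict B).map (fun ω => ω n)) ⊗ₘ M.kerPow k := by
  have hc : ∀ k, Measurable fun ω : ℕ → 𝒳 => ω k := fun k => measurable_pi_apply k
  have : IsFiniteMeasure (((M.law x).restrict B).map (fun ω => (ω n, ω (n + k)))) :=
    Measure.isFiniteMeasure_map _ _
  refine Measure.ext_prod fun {s t} hs ht => ?_
  have hsn : MeasurableSet[filt 𝒳 n] ((fun ω : ℕ → 𝒳 => ω n) ⁻¹' s) :=
    measurable_coord le_rfl hs
  have h1 := congrArg (fun ν => ν t) (M.map_law x n k (hsn.inter hB))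
  beta_reduce at h1
  rw [Measure.map_apply (hc _) ht, Measure.restrict_apply (hc _ ht),
    Measure.bind_apply ht (Kernel.aemeasurable _),
    lintegral_map ((M.kerPow k).measurable_coe ht) (hc n)] at h1
  rw [Measure.compProd_apply_prod hs ht, setLIntegral_map hs ((M.kerPow k).measurable_coe ht) (hc n),
    Measure.restrict_restrict (hc n hs), ← h1,
    Measure.map_apply ((hc n).prodMk (hc (n + k))) (hs.prod ht),
    Measure.restrict_apply (((hc n).prodMk (hc (n + k))) (hs.prod ht))]
  congr 1
  ext ω
  simp only [mem_inter_iff, mem_preimage, mem_prod]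
  tauto

lemma map_law_zero (x : 𝒳) : (M.law x).map (fun ω => ω 0) = Measure.dirac x := by
  have hc : Measurable fun ω : ℕ → 𝒳 => ω 0 := measurable_pi_apply 0
  have key : ∀ A : Set 𝒳, MeasurableSet A → x ∈ A → M.law x ((fun ω => ω 0) ⁻¹' A) = 1 := by
    intro A _ hx
    refine le_antisymm prob_le_one ?_
    rw [← M.law_zero x]
    refine measure_mono fun ω (hω : ω 0 = x) => ?_
    simpa [hω] using hx
  refine Measure.ext fun A hA => ?_
  rw [Measure.map_apply hc hA, Measure.dirac_apply' _ hA]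
  by_cases hx : x ∈ A
  · simp [hx, key A hA hx]
  · have h := key Aᶜ hA.compl hx
    rw [preimage_compl, prob_compl_eq_one_iff (hc hA)] at h
    simp [hx, h]

lemma map_law_eq (x : 𝒳) (k : ℕ) : (M.law x).map (fun ω => ω k) = M.kerPow k x := by
  have h := M.map_law x 0 k MeasurableSet.univ
  rw [Measure.restrict_univ, map_law_zero, Measure.dirac_bind (Kernel.measurable _), zero_add] at h
  exact h

/-- Conditional expectation of a function of `(X_n, X_m)` given the past at time `n`, when `Q` is
the transition kernel from time `n` to time `m`. -/
lemma condExp_pair (x : 𝒳) (n m : ℕ) (Q : Kernel 𝒳 𝒳) [IsMarkovKernel Q]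
    (hQ : ∀ B : Set (ℕ → 𝒳), MeasurableSet[filt 𝒳 n] B →
      ((M.law x).restrict B).map (fun ω => (ω n, ω m))
        = (((M.law x).restrict B).map (fun ω => ω n)) ⊗ₘ Q)
    {F : 𝒳 × 𝒳 → ℝ} (hF : Measurable F) (hFi : Integrable (fun ω => F (ω n, ω m)) (M.law x)) :
    (M.law x)[fun ω => F (ω n, ω m) | filt 𝒳 n] =ᵐ[M.law x] fun ω => ∫ v, F (ω n, v) ∂(Q (ω n)) := by
  have hc : ∀ k, Measurable fun ω : ℕ → 𝒳 => ω k := fun k => measurable_pi_apply k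
  have hG : StronglyMeasurable fun u => ∫ v, F (u, v) ∂(Q u) :=
    hF.stronglyMeasurable.integral_kernel_prod_right'
  have hint : ∀ B : Set (ℕ → 𝒳), MeasurableSet[filt 𝒳 n] B →
      Integrable F ((((M.law x).restrict B).map (fun ω => ω n)) ⊗ₘ Q) := by
    intro B hB
    rw [← hQ B hB, integrable_map_measure hF.aestronglyMeasurable
      ((hc n).prodMk (hc m)).aemeasurable]
    exact hFi.restrict
  refine (ae_eq_condExp_of_forall_setIntegral_eq ((filt 𝒳).le n) hFi ?_ ?_ ?_).symm
  · intro B hB _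
    have h1 := ((Measure.integrable_compProd_iff hF.aestronglyMeasurable).1 (hint B hB)).2
    have h2 : Integrable (fun u => ∫ v, F (u, v) ∂(Q u))
        (((M.law x).restrict B).map (fun ω => ω n)) :=
      h1.mono' hG.aestronglyMeasurable
        (Eventually.of_forall fun u => norm_integral_le_integral_norm _)
    rwa [integrable_map_measure hG.aestronglyMeasurable (hc n).aemeasurable] at h2
  · intro B hB _
    have h1 := Measure.integral_compProd (hint B hB)
    rw [← hQ B hB, integral_map ((hc n).prodMk (hc m)).aemeasurable hF.aestronglyMeasurable,
      integral_map (hc n).aemeasurable hG.aestronglyMeasurable] at h1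
    exact h1.symm
  · exact (hG.comp_measurable (measurable_coord le_rfl)).aestronglyMeasurable

end MarkovChain

/-! ### Geometric ergodicity for signed functions -/

/-- A nonnegative function whose truncations have bounded integrals is integrable. -/
lemma integrable_of_integral_min_le {α : Type*} [MeasurableSpace α] {μ : Measure α}
    [IsFiniteMeasure μ] {f : α → ℝ} (hf : Measurable f) (hf0 : ∀ a, 0 ≤ f a) {C : ℝ}
    (hC : ∀ m : ℕ, ∫ a, min (f a) (m + 1) ∂μ ≤ C) : Integrable f μ := by
  have hlim : Tendsto (fun m : ℕ => ∫⁻ a, ENNReal.ofReal (min (f a) (m + 1)) ∂μ) atTop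
      (nhds (∫⁻ a, ENNReal.ofReal (f a) ∂μ)) := by
    refine lintegral_tendsto_of_tendsto_of_monotone
      (fun m => (ENNReal.measurable_ofReal.comp (hf.min measurable_const)).aemeasurable)
      (Eventually.of_forall fun a m m' hmm => ?_) (Eventually.of_forall fun a => ?_)
    · refine ENNReal.ofReal_le_ofReal (min_le_min le_rfl ?_)
      have : (m : ℝ) ≤ m' := by exact_mod_cast hmm
      linarith
    · refine tendsto_const_nhds.congr' ?_
      obtain ⟨N, hN⟩ := exists_nat_ge (f a)
      filter_upwards [eventually_ge_atTop N] with m hm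
      have : (N : ℝ) ≤ m := by exact_mod_cast hm
      rw [min_eq_left (by linarith)]
  have hle : ∫⁻ a, ENNReal.ofReal (f a) ∂μ ≤ ENNReal.ofReal C := by
    refine le_of_tendsto' hlim fun m => ?_
    have hm0 : ∀ a, 0 ≤ min (f a) ((m : ℝ) + 1) := fun a => le_min (hf0 a) (by positivity)
    have hi : Integrable (fun a => min (f a) ((m : ℝ) + 1)) μ := by
      refine (integrable_const ((m : ℝ) + 1)).mono' (hf.min measurable_const).aestronglyMeasurable
        (Eventually.of_forall fun a => ?_)
      rw [Real.norm_eq_abs, abs_of_nonneg (hm0 a)]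
      exact min_le_right _ _
    rw [← ofReal_integral_eq_lintegral_ofReal hi (Eventually.of_forall hm0)]
    exact ENNReal.ofReal_le_ofReal (hC m)
  refine ⟨hf.aestronglyMeasurable, ?_⟩
  rw [hasFiniteIntegral_iff_ofReal (Eventually.of_forall hf0)]
  exact hle.trans_lt ENNReal.ofReal_lt_top

/-- Finite geometric sums of ratio `e^{-κ}` are at most `e^κ / (e^κ - 1)`. -/
lemma one_add_sum_exp_le {κ : ℝ} (hκ : 0 < κ) (j l : ℕ) :
    1 + ∑ i ∈ Finset.Ioo j l, Real.exp (-κ * ((i - j : ℕ) : ℝ))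
      ≤ Real.exp κ / (Real.exp κ - 1) := by
  have ha0 : 0 ≤ Real.exp (-κ) := (Real.exp_pos _).le
  have ha1 : Real.exp (-κ) < 1 := by simpa using hκ
  have hpow : ∀ k : ℕ, Real.exp (-κ * (k : ℝ)) = Real.exp (-κ) ^ k := fun k => by
    rw [← Real.exp_nat_mul, mul_comm]
  have hIoo : Finset.Ioo j l = Finset.Ico (j + 1) l := by
    ext i; simp only [Finset.mem_Ioo, Finset.mem_Ico]; omega
  have hq : Real.exp κ / (Real.exp κ - 1) = (1 - Real.exp (-κ))⁻¹ := by
    have h1 : Real.exp κ - 1 ≠ 0 := by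
      have := Real.one_lt_exp_iff.2 hκ
      linarith
    have h2 : 1 - Real.exp (-κ) ≠ 0 := by linarith
    rw [div_eq_iff h1, inv_mul_eq_div, eq_div_iff h2, mul_sub, ← Real.exp_add]
    simp
  rw [hq, hIoo, Finset.sum_Ico_eq_sum_range]
  have : ∀ i, Real.exp (-κ * ((j + 1 + i - j : ℕ) : ℝ)) = Real.exp (-κ) ^ (i + 1) := fun i => by
    rw [hpow, show j + 1 + i - j = i + 1 by omega]
  simp only [this]
  have h := (summable_geometric_of_lt_one ha0 ha1).sum_le_tsum (Finset.range (l - (j + 1) + 1))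
    (fun i _ => pow_nonneg ha0 i)
  rw [Finset.sum_range_succ', tsum_geometric_of_lt_one ha0 ha1, pow_zero] at h
  linarith

namespace MarkovChain

variable {𝒳 : Type} [MeasurableSpace 𝒳] (M : MarkovChain 𝒳)

section ergodic

variable {V : 𝒳 → ℝ} (hV : Measurable V) (hV1 : ∀ x, 1 ≤ V x) {lam : Measure 𝒳}
  (hlamV : Integrable V lam) {R κ : ℝ} (hR : 0 < R)
  (hB1 : ∀ (n : ℕ) (x : 𝒳) (f : 𝒳 → ℝ), Measurable f →
      (∀ y, 0 < f y) → (∀ y, f y ≤ V y) →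
      |(∫ ω, f (ω n) ∂(M.law x)) - ∫ y, f y ∂lam| ≤ R * V x * Real.exp (-κ * n))

include hB1 in
lemma ergodic_kerPow (n : ℕ) (x : 𝒳) {f : 𝒳 → ℝ} (hf : Measurable f)
    (hf0 : ∀ y, 0 < f y) (hfV : ∀ y, f y ≤ V y) :
    |(∫ y, f y ∂(M.kerPow n x)) - ∫ y, f y ∂lam| ≤ R * V x * Real.exp (-κ * n) := by
  have h := hB1 n x f hf hf0 hfV
  rwa [← integral_map (μ := M.law x) (φ := fun ω => ω n) (measurable_pi_apply n).aemeasurable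
    hf.aestronglyMeasurable, M.map_law_eq] at h

include hV hV1 hlamV hB1 in
lemma integrable_V_kerPow (n : ℕ) (x : 𝒳) : Integrable V (M.kerPow n x) := by
  have hV0 : ∀ y, 0 ≤ V y := fun y => zero_le_one.trans (hV1 y)
  refine integrable_of_integral_min_le hV hV0
    (C := (∫ y, V y ∂lam) + R * V x * Real.exp (-κ * n)) fun m => ?_
  have hpos : ∀ y, 0 < min (V y) ((m : ℝ) + 1) := fun y =>
    lt_min (zero_lt_one.trans_le (hV1 y)) (by positivity)
  have hm : Measurable fun y => min (V y) ((m : ℝ) + 1) := hV.min measurable_const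
  have h := M.ergodic_kerPow hB1 n x hm hpos fun y => min_le_left _ _
  have h2 : ∫ y, min (V y) ((m : ℝ) + 1) ∂lam ≤ ∫ y, V y ∂lam := by
    refine integral_mono_of_nonneg (Eventually.of_forall fun y => (hpos y).le) hlamV
      (Eventually.of_forall fun y => min_le_left _ _)
  linarith [(abs_le.1 h).2]

include hV hV1 hlamV hB1 hR in
/-- The ergodicity bound extends from positive to nonnegative functions, by applying it to
`(1 - δ) φ + δ ≤ V` and letting `δ → 0`. -/
lemma ergodic_nonneg [IsProbabilityMeasure lam] (n : ℕ) (x : 𝒳) {φ : 𝒳 → ℝ} (hφ : Measurable φ)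
    (hφ0 : ∀ y, 0 ≤ φ y) (hφV : ∀ y, φ y ≤ V y) :
    |(∫ y, φ y ∂(M.kerPow n x)) - ∫ y, φ y ∂lam| ≤ R * V x * Real.exp (-κ * n) := by
  have hb : ∀ y, ‖φ y‖ ≤ V y := fun y => by
    rw [Real.norm_eq_abs, abs_of_nonneg (hφ0 y)]; exact hφV y
  have hi1 : Integrable φ (M.kerPow n x) :=
    (M.integrable_V_kerPow hV hV1 hlamV hB1 n x).mono' hφ.aestronglyMeasurable
      (Eventually.of_forall hb)
  have hi2 : Integrable φ lam :=
    hlamV.mono' hφ.aestronglyMeasurable (Eventually.of_forall hb)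
  have hB0 : 0 ≤ R * V x * Real.exp (-κ * n) := by
    have := hV1 x
    positivity
  set B := R * V x * Real.exp (-κ * n) with hBdef
  set Δ := (∫ y, φ y ∂(M.kerPow n x)) - ∫ y, φ y ∂lam with hΔ
  have key : ∀ δ : ℝ, 0 < δ → δ < 1 → (1 - δ) * |Δ| ≤ B := by
    intro δ hδ0 hδ1
    have h := M.ergodic_kerPow hB1 n x (f := fun y => (1 - δ) * φ y + δ)
      ((hφ.const_mul _).add_const _)
      (fun y => by have := mul_nonneg (by linarith : (0 : ℝ) ≤ 1 - δ) (hφ0 y); linarith)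
      (fun y => by nlinarith [hφV y, hV1 y])
    rw [integral_add (hi1.const_mul _) (integrable_const _),
      integral_add (hi2.const_mul _) (integrable_const _), integral_const_mul,
      integral_const_mul] at h
    simp only [integral_const, probReal_univ, one_smul] at h
    rw [add_sub_add_right_eq_sub, ← mul_sub, abs_mul, abs_of_pos (by linarith)] at h
    exact h
  by_contra! hlt
  have hΔ0 : 0 < |Δ| := hB0.trans_lt hlt
  have h := key ((|Δ| - B) / (2 * |Δ|)) (by apply div_pos <;> linarith)
    (by rw [div_lt_one (by linarith)]; linarith)
  have h3 : (1 - (|Δ| - B) / (2 * |Δ|)) * |Δ| = |Δ| - (|Δ| - B) / 2 := by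
    field_simp
  linarith

include hV hV1 hlamV hB1 hR in
/-- The ergodicity bound for signed functions, with an extra factor `2` from splitting into
positive and negative parts. -/
lemma ergodic_abs [IsProbabilityMeasure lam] (n : ℕ) (x : 𝒳) {f : 𝒳 → ℝ}
    (hf : Measurable f) (hfV : ∀ y, |f y| ≤ V y) :
    |(∫ y, f y ∂(M.kerPow n x)) - ∫ y, f y ∂lam| ≤ 2 * R * V x * Real.exp (-κ * n) := by
  have hp : ∀ y, max (f y) 0 ≤ V y := fun y =>
    max_le ((le_abs_self _).trans (hfV y)) (zero_le_one.trans (hV1 y))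
  have hm : ∀ y, max (-f y) 0 ≤ V y := fun y =>
    max_le ((neg_le_abs _).trans (hfV y)) (zero_le_one.trans (hV1 y))
  have h1 := M.ergodic_nonneg hV hV1 hlamV hR hB1 n x (hf.max measurable_const)
    (fun y => le_max_right _ _) hp
  have h2 := M.ergodic_nonneg hV hV1 hlamV hR hB1 n x (hf.neg.max measurable_const)
    (fun y => le_max_right _ _) hm
  have hsplit : ∀ ν : Measure 𝒳, Integrable V ν →
      ∫ y, f y ∂ν = (∫ y, max (f y) 0 ∂ν) - ∫ y, max (-f y) 0 ∂ν := by
    intro ν hν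
    have hfi : Integrable f ν := hν.mono' hf.aestronglyMeasurable (Eventually.of_forall hfV)
    rw [← integral_sub hfi.pos_part hfi.neg_part]
    refine integral_congr_ae (Eventually.of_forall fun y => ?_)
    rcases le_total (f y) 0 with h | h
    · simp [h]
    · simp [h]
  rw [hsplit _ (M.integrable_V_kerPow hV hV1 hlamV hB1 n x), hsplit _ hlamV]
  simp only [Pi.neg_apply] at h2
  rw [abs_le] at *
  constructor <;> linarith [h1.1, h1.2, h2.1, h2.2]

end ergodic

end MarkovChain

/-! ### Moment bounds for the martingale and drift parts -/

lemma integrable_and_integral_le_of_lintegral_le {α : Type*} [MeasurableSpace α] {μ : Measure α}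
    {f : α → ℝ} (hf : Measurable f) (hf0 : ∀ a, 0 ≤ f a) {C : ℝ≥0∞}
    (h : ∫⁻ a, ENNReal.ofReal (f a) ∂μ ≤ C) (hC : C < ⊤) :
    Integrable f μ ∧ ∫ a, f a ∂μ ≤ C.toReal := by
  refine ⟨⟨hf.aestronglyMeasurable, ?_⟩, ?_⟩
  · rw [hasFiniteIntegral_iff_ofReal (Eventually.of_forall hf0)]
    exact h.trans_lt hC
  · rw [integral_eq_lintegral_of_nonneg_ae (Eventually.of_forall hf0) hf.aestronglyMeasurable]
    exact ENNReal.toReal_mono hC.ne h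

lemma integrable_of_integrable_abs_rpow {α : Type*} [MeasurableSpace α] {μ : Measure α}
    [IsFiniteMeasure μ] {f : α → ℝ} (hf : Measurable f) {r : ℝ} (hr : 1 ≤ r)
    (h : Integrable (fun a => |f a| ^ r) μ) : Integrable f μ := by
  refine (h.add (integrable_const (1 : ℝ))).mono' hf.aestronglyMeasurable
    (Eventually.of_forall fun a => ?_)
  rw [Real.norm_eq_abs, Pi.add_apply]
  rcases le_total |f a| 1 with h1 | h1
  · have : 0 ≤ |f a| ^ r := by positivity
    linarith
  · have := Real.rpow_le_rpow_of_exponent_le h1 hr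
    rw [Real.rpow_one] at this
    linarith

namespace MarkovChain

variable {𝒳 : Type} [MeasurableSpace 𝒳] (M : MarkovChain 𝒳)

lemma moment_V {V : 𝒳 → ℝ} (hV : Measurable V) (hV1 : ∀ x, 1 ≤ V x) {x : 𝒳} {r : ℝ}
    (h : M.upsStar V r x < ⊤) (i : ℕ) :
    Integrable (fun ω => V (ω i) ^ r) (M.law x) ∧
      ∫ ω, V (ω i) ^ r ∂(M.law x) ≤ (M.upsStar V r x).toReal := by
  refine integrable_and_integral_le_of_lintegral_le
    ((hV.comp (measurable_pi_apply i)).pow_const r)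
    (fun ω => Real.rpow_nonneg (zero_le_one.trans (hV1 _)) _) ?_ h
  exact le_iSup (fun n : ℕ => ∫⁻ ω, ENNReal.ofReal (V (ω n) ^ r) ∂(M.law x)) i

lemma moment_g {g : 𝒳 → 𝒳 → ℝ} (hg : Measurable fun q : 𝒳 × 𝒳 => g q.1 q.2) {x : 𝒳} {r : ℝ}
    (h : M.gStar g r x < ⊤) (i : ℕ) :
    Integrable (fun ω => |g (ω (i + 1)) (ω i)| ^ r) (M.law x) ∧
      ∫ ω, |g (ω (i + 1)) (ω i)| ^ r ∂(M.law x) ≤ (M.gStar g r x).toReal := by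
  have hm : Measurable fun ω : ℕ → 𝒳 => g (ω (i + 1)) (ω i) := by
    have hp : Measurable fun ω : ℕ → 𝒳 => (ω (i + 1), ω i) :=
      (measurable_pi_apply (i + 1)).prodMk (measurable_pi_apply i)
    exact hg.comp hp
  refine integrable_and_integral_le_of_lintegral_le
    ((continuous_abs.measurable.comp hm).pow_const r)
    (fun ω => Real.rpow_nonneg (abs_nonneg _) _) ?_ h
  exact le_iSup (fun j : ℕ => ∫⁻ ω, ENNReal.ofReal (|g (ω (j + 1)) (ω j)| ^ r) ∂(M.law x)) i

lemma measurable_gtilde {g : 𝒳 → 𝒳 → ℝ} (hg : Measurable fun q : 𝒳 × 𝒳 => g q.1 q.2) :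
    Measurable (M.gtilde g) := by
  have h : Measurable fun q : 𝒳 × 𝒳 => g q.2 q.1 := hg.comp measurable_swap
  exact (h.stronglyMeasurable.integral_kernel_prod_right' (κ := M.K)).measurable

/-- Moment bound for additive functionals of the chain: the conditional expectations of the
increments decay geometrically, so their sums are controlled by `V`. -/
lemma drift_moment {V : 𝒳 → ℝ} (hV : Measurable V) (hV1 : ∀ x, 1 ≤ V x) {lam : Measure 𝒳}
    [IsProbabilityMeasure lam] (hlamV : Integrable V lam) {R κ : ℝ} (hR : 0 < R) (hκ : 0 < κ)
    (hB1 : ∀ (n : ℕ) (x : 𝒳) (f : 𝒳 → ℝ), Measurable f →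
      (∀ y, 0 < f y) → (∀ y, f y ≤ V y) →
      |(∫ ω, f (ω n) ∂(M.law x)) - ∫ y, f y ∂lam| ≤ R * V x * Real.exp (-κ * n))
    {f : 𝒳 → ℝ} (hf : Measurable f) (hfV : ∀ y, |f y| ≤ V y) {x : 𝒳} {r : ℝ} (hr : 2 ≤ r)
    (hυ : M.upsStar V r x < ⊤) (n : ℕ) :
    Integrable (fun ω => |∑ i ∈ Finset.range n, (f (ω i) - ∫ y, f y ∂lam)| ^ r) (M.law x) ∧
    ∫ ω, |∑ i ∈ Finset.range n, (f (ω i) - ∫ y, f y ∂lam)| ^ r ∂(M.law x)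
      ≤ (2 * (r - 1) * n) ^ (r / 2) * ((4 * R ^ 2 * (Real.exp κ / (Real.exp κ - 1))) ^ (r / 2)
          * (M.upsStar V r x).toReal) := by
  set c := ∫ y, f y ∂lam with hc
  set q := Real.exp κ / (Real.exp κ - 1) with hq
  have hq1 : 1 ≤ q := by
    have := one_add_sum_exp_le hκ 0 0
    simpa using this
  have hV0 : ∀ y, 0 ≤ V y := fun y => zero_le_one.trans (hV1 y)
  have hcm : ∀ k, Measurable fun ω : ℕ → 𝒳 => ω k := fun k => measurable_pi_apply k
  have hhm : Measurable fun u => f u - c := hf.sub_const c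
  have herg : ∀ k u, |(∫ y, f y ∂(M.kerPow k u)) - c| ≤ 2 * R * V u * Real.exp (-κ * k) :=
    fun k u => M.ergodic_abs hV hV1 hlamV hR hB1 k u hf hfV
  have hh0 : ∀ u, |f u - c| ≤ 2 * R * V u := by
    intro u
    have h := herg 0 u
    have h0 : M.kerPow 0 u = Measure.dirac u := Kernel.id_apply u
    rw [h0, integral_dirac' _ _ hf.stronglyMeasurable] at h
    simpa using h
  have hTv : ∀ k u, ∫ y, (f y - c) ∂(M.kerPow k u) = (∫ y, f y ∂(M.kerPow k u)) - c := by
    intro k u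
    have hi : Integrable f (M.kerPow k u) :=
      (M.integrable_V_kerPow hV hV1 hlamV hB1 k u).mono' hf.aestronglyMeasurable
        (Eventually.of_forall hfV)
    rw [integral_sub hi (integrable_const _)]
    simp
  have hVr := fun i => M.moment_V hV hV1 hυ i
  have hYr : ∀ i, Integrable (fun ω : ℕ → 𝒳 => |f (ω i) - c| ^ r) (M.law x) := by
    intro i
    refine ((hVr i).1.const_mul ((2 * R) ^ r)).mono'
      ((continuous_abs.measurable.comp (hhm.comp (hcm i))).pow_const r).aestronglyMeasurable
      (Eventually.of_forall fun ω => ?_)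
    rw [Real.norm_eq_abs, abs_of_nonneg (by positivity), ← Real.mul_rpow (by positivity) (hV0 _)]
    exact Real.rpow_le_rpow (abs_nonneg _) (hh0 _) (by linarith)
  -- The dominating variables are `H_i = 2 R √q V(X_i)`.
  have hsqrt : 0 ≤ 2 * R * √q := by positivity
  have hHeq : (2 * R * √q) ^ r = (4 * R ^ 2 * q) ^ (r / 2) := by
    rw [show 4 * R ^ 2 * q = (2 * R * √q) ^ 2 by
      rw [mul_pow, Real.sq_sqrt (by linarith)]; ring, ← Real.rpow_natCast, ← Real.rpow_mul hsqrt]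
    congr 1
    push_cast
    ring
  refine ⟨?_, ?_⟩
  · exact integrable_partialSum hr (fun i => hhm.comp (hcm i)) hYr n
  · refine rio_inequality (μ := M.law x) (filt 𝒳) hr (Y := fun i ω => f (ω i) - c)
      (fun i => ((hhm.comp (measurable_coord le_rfl)).stronglyMeasurable)) hYr
      (fun j i ω => ∫ y, (f y - c) ∂(M.kerPow (i - j) (ω j))) ?_
      (H := fun i ω => 2 * R * √q * V (ω i)) (fun i => (hV.comp (hcm i)).const_mul _)
      (fun i ω => mul_nonneg hsqrt (hV0 _)) ?_ ?_ ?_ n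
    · intro j i hji
      obtain ⟨k, rfl⟩ := Nat.exists_eq_add_of_lt hji
      rw [show j + k + 1 = j + (k + 1) by ring, Nat.add_sub_cancel_left]
      exact M.condExp_pair x j (j + (k + 1)) (M.kerPow (k + 1))
        (fun B hB => M.pair_law_add x j (k + 1) hB) (F := fun p => f p.2 - c)
        (hhm.comp measurable_snd)
        (integrable_of_integrable_abs_rpow (hhm.comp (hcm _)) (by linarith) (hYr _))
    · intro i
      simp_rw [Real.mul_rpow hsqrt (hV0 _)]
      exact (hVr i).1.const_mul _
    · intro i
      simp_rw [Real.mul_rpow hsqrt (hV0 _)]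
      rw [integral_const_mul, hHeq]
      exact mul_le_mul_of_nonneg_left (hVr i).2 (by positivity)
    · intro j l
      refine Eventually.of_forall fun ω => ?_
      simp only [hTv]
      set y := f (ω j) - c
      set S := ∑ i ∈ Finset.Ioo j l, ((∫ y, f y ∂(M.kerPow (i - j) (ω j))) - c) with hS
      have hy : |y| ≤ 2 * R * V (ω j) := hh0 _
      have hSb : |y + S| ≤ 2 * R * V (ω j) * q := by
        calc |y + S| ≤ |y| + ∑ i ∈ Finset.Ioo j l, |(∫ y, f y ∂(M.kerPow (i - j) (ω j))) - c| :=
              (abs_add_le _ _).trans (add_le_add le_rfl (Finset.abs_sum_le_sum_abs _ _))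
          _ ≤ 2 * R * V (ω j) + ∑ i ∈ Finset.Ioo j l,
                2 * R * V (ω j) * Real.exp (-κ * ((i - j : ℕ) : ℝ)) :=
              add_le_add hy (Finset.sum_le_sum fun i _ => herg _ _)
          _ = 2 * R * V (ω j) * (1 + ∑ i ∈ Finset.Ioo j l,
                Real.exp (-κ * ((i - j : ℕ) : ℝ))) := by
              rw [← Finset.mul_sum]; ring
          _ ≤ _ := mul_le_mul_of_nonneg_left (one_add_sum_exp_le hκ j l)
              (by have := hV0 (ω j); positivity)
      calc y ^ 2 + y * S = y * (y + S) := by ring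
        _ ≤ |y| * |y + S| := by rw [← abs_mul]; exact le_abs_self _
        _ ≤ (2 * R * V (ω j)) * (2 * R * V (ω j) * q) :=
            mul_le_mul hy hSb (abs_nonneg _) ((abs_nonneg _).trans hy)
        _ = (2 * R * √q * V (ω j)) ^ 2 := by
            rw [mul_pow, mul_pow, Real.sq_sqrt (by linarith)]; ring

/-- The filtration `i ↦ σ(X_0, …, X_{i+1})`, to which `g(X_{i+1}, X_i)` is adapted. -/
def filtSucc (𝒳 : Type) [MeasurableSpace 𝒳] :
    Filtration ℕ (inferInstance : MeasurableSpace (ℕ → 𝒳)) where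
  seq i := filt 𝒳 (i + 1)
  mono' _ _ h := (filt 𝒳).mono (Nat.succ_le_succ h)
  le' i := (filt 𝒳).le (i + 1)

/-- Moment bound for the martingale `∑ (g(X_{i+1}, X_i) - g̃(X_i))`. -/
lemma martingale_moment {V : 𝒳 → ℝ} (hV : Measurable V) (hV1 : ∀ x, 1 ≤ V x)
    {g : 𝒳 → 𝒳 → ℝ} (hg : Measurable fun q : 𝒳 × 𝒳 => g q.1 q.2)
    (hgInt : ∀ u, Integrable (fun v => g v u) (M.K u))
    (hB2 : ∀ x, |M.gtilde g x| ≤ V x) {x : 𝒳} {r : ℝ} (hr : 2 ≤ r)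
    (hυ : M.upsStar V r x < ⊤) (hγ : M.gStar g r x < ⊤) (n : ℕ) :
    Integrable (fun ω => |∑ i ∈ Finset.range n,
        (g (ω (i + 1)) (ω i) - M.gtilde g (ω i))| ^ r) (M.law x) ∧
    ∫ ω, |∑ i ∈ Finset.range n, (g (ω (i + 1)) (ω i) - M.gtilde g (ω i))| ^ r ∂(M.law x)
      ≤ (2 * (r - 1) * n) ^ (r / 2) *
        (2 ^ (r - 1) * ((M.gStar g r x).toReal + (M.upsStar V r x).toReal)) := by
  have hV0 : ∀ y, 0 ≤ V y := fun y => zero_le_one.trans (hV1 y)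
  have hcm : ∀ k, Measurable fun ω : ℕ → 𝒳 => ω k := fun k => measurable_pi_apply k
  have hgt := M.measurable_gtilde hg
  have hF : Measurable fun p : 𝒳 × 𝒳 => g p.2 p.1 - M.gtilde g p.1 :=
    (hg.comp measurable_swap).sub (hgt.comp measurable_fst)
  have hYm : ∀ i, Measurable fun ω : ℕ → 𝒳 => g (ω (i + 1)) (ω i) - M.gtilde g (ω i) :=
    fun i => hF.comp ((hcm i).prodMk (hcm (i + 1)))
  have hVr := fun i => M.moment_V hV hV1 hυ i
  have hgr := fun i => M.moment_g hg hγ i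
  have hpt : ∀ i (ω : ℕ → 𝒳), |g (ω (i + 1)) (ω i) - M.gtilde g (ω i)| ^ r
      ≤ 2 ^ (r - 1) * (|g (ω (i + 1)) (ω i)| ^ r + V (ω i) ^ r) := by
    intro i ω
    refine (Real.rpow_le_rpow (abs_nonneg _) ((abs_sub _ _).trans
      (add_le_add le_rfl (hB2 (ω i)))) (by linarith)).trans ?_
    have h := add_rpow_le_weighted (abs_nonneg (g (ω (i + 1)) (ω i))) (hV0 (ω i))
      (by linarith : 1 ≤ r) (by norm_num : (0 : ℝ) < 1 / 2) (by norm_num)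
    have h2 : (1 / 2 : ℝ) ^ (1 - r) = 2 ^ (r - 1) := by
      rw [one_div, Real.inv_rpow (by norm_num), ← Real.rpow_neg (by norm_num), neg_sub]
    rw [show (1 : ℝ) - 1 / 2 = 1 / 2 by norm_num, h2, ← mul_add] at h
    exact h
  have hdom : ∀ i, Integrable (fun ω : ℕ → 𝒳 =>
      2 ^ (r - 1) * (|g (ω (i + 1)) (ω i)| ^ r + V (ω i) ^ r)) (M.law x) :=
    fun i => ((hgr i).1.add (hVr i).1).const_mul _
  have hYr : ∀ i, Integrable (fun ω : ℕ → 𝒳 =>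
      |g (ω (i + 1)) (ω i) - M.gtilde g (ω i)| ^ r) (M.law x) := by
    intro i
    refine (hdom i).mono'
      ((continuous_abs.measurable.comp (hYm i)).pow_const r).aestronglyMeasurable
      (Eventually.of_forall fun ω => ?_)
    rw [Real.norm_eq_abs, abs_of_nonneg (by positivity)]
    exact hpt i ω
  refine ⟨?_, ?_⟩
  · exact integrable_partialSum hr (fun i => hYm i) hYr n
  · refine rio_inequality (μ := M.law x) (filtSucc 𝒳) hr
      (Y := fun i ω => g (ω (i + 1)) (ω i) - M.gtilde g (ω i)) ?_ hYr
      (fun _ _ _ => 0) ?_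
      (H := fun i ω => |g (ω (i + 1)) (ω i) - M.gtilde g (ω i)|)
      (fun i => continuous_abs.measurable.comp (hYm i))
      (fun i ω => abs_nonneg _) hYr ?_ ?_ n
    · intro i
      refine Measurable.stronglyMeasurable ?_
      exact hF.comp (Measurable.prodMk (measurable_coord (Nat.le_succ i))
        (measurable_coord (n := i + 1) le_rfl))
    · intro j i hji
      -- By the tower property through `filt i`, since `j + 1 ≤ i`.
      have hYi := integrable_of_integrable_abs_rpow (hYm i) (by linarith) (hYr i)
      have h1 := M.condExp_pair x i (i + 1) M.K (fun B hB => M.pair_law x i hB) hF hYi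
      have h2 : (M.law x)[fun ω => g (ω (i + 1)) (ω i) - M.gtilde g (ω i) | filt 𝒳 i]
          =ᵐ[M.law x] 0 := by
        refine h1.trans (Eventually.of_forall fun ω => ?_)
        simp only [Pi.zero_apply]
        rw [integral_sub (hgInt _) (integrable_const _)]
        simp [gtilde]
      have h3 := condExp_condExp_of_le (μ := M.law x)
        (f := fun ω => g (ω (i + 1)) (ω i) - M.gtilde g (ω i))
        ((filt 𝒳).mono hji) ((filt 𝒳).le i)
      refine h3.symm.trans ((condExp_congr_ae h2).trans ?_)
      rw [condExp_zero]
      rfl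
    · intro i
      refine (integral_mono (hYr i) (hdom i) (hpt i)).trans ?_
      rw [integral_const_mul, integral_add (hgr i).1 (hVr i).1]
      exact mul_le_mul_of_nonneg_left (add_le_add (hgr i).2 (hVr i).2) (by positivity)
    · intro j l
      refine Eventually.of_forall fun ω => ?_
      simp

end MarkovChain

/-! ### Constants -/

lemma martingale_constant_le {r : ℝ} (hr : 2 ≤ r) :
    (2 * (r - 1)) ^ (r / 2) * 2 ^ (r - 1) ≤ (16 * r) ^ (r / 2) := by
  have h4 : (4 : ℝ) ^ (r / 2) = 2 ^ r := by
    rw [show (4 : ℝ) = 2 ^ (2 : ℝ) by norm_num, ← Real.rpow_mul (by norm_num)]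
    congr 1
    ring
  calc (2 * (r - 1)) ^ (r / 2) * 2 ^ (r - 1) ≤ (2 * (r - 1)) ^ (r / 2) * 2 ^ r := by
        gcongr
        · exact Real.rpow_nonneg (by linarith) _
        · norm_num
        · linarith
    _ = (2 * (r - 1) * 4) ^ (r / 2) := by
        rw [← h4, ← Real.mul_rpow (by linarith) (by norm_num)]
    _ ≤ (16 * r) ^ (r / 2) :=
        Real.rpow_le_rpow (by linarith) (by linarith) (by linarith)

/-- The gain `((r - 1) / r)^{r/2} ≤ e^{-1/2}` compensates for the constant lost in the weighted
splitting of the `r`-th power. -/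
lemma drift_constant_le {r a : ℝ} (hr : 2 ≤ r) (ha : 0 ≤ a) :
    (3 / 4 : ℝ) ^ (1 - r) * ((2 * (r - 1)) ^ (r / 2) * (4 * a) ^ (r / 2))
      ≤ 4 ^ (r - 1) * (2 * r * a) ^ (r / 2) := by
  have hr0 : 0 < r := by linarith
  have h4 : (4 : ℝ) ^ (r / 2) = 2 * 2 ^ (r - 1) := by
    rw [show (4 : ℝ) = 2 ^ (2 : ℝ) by norm_num, ← Real.rpow_mul (by norm_num),
      Real.rpow_sub_one (by norm_num)]
    rw [show (2 : ℝ) * (r / 2) = r by ring]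
    ring
  have hc : (1 - 1 / r) ^ (r / 2) ≤ 2 / 3 := by
    have h1 : 1 - 1 / r ≤ Real.exp (-(1 / r)) := by
      have := Real.add_one_le_exp (-(1 / r))
      linarith
    have h0 : 0 ≤ 1 - 1 / r := by
      have : 1 / r ≤ 1 := by rw [div_le_one hr0]; linarith
      linarith
    refine (Real.rpow_le_rpow h0 h1 (by linarith)).trans ?_
    rw [← Real.exp_mul, show -(1 / r) * (r / 2) = -(1 / 2) by field_simp, Real.exp_neg]
    have := Real.add_one_le_exp (1 / 2 : ℝ)
    rw [inv_le_comm₀ (Real.exp_pos _) (by norm_num)]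
    linarith
  have hsplit : (2 * (r - 1)) ^ (r / 2) * (4 * a) ^ (r / 2)
      = (2 * r * a) ^ (r / 2) * ((1 - 1 / r) ^ (r / 2) * (2 * 2 ^ (r - 1))) := by
    have h0 : 0 ≤ 1 - 1 / r := by
      have : 1 / r ≤ 1 := by rw [div_le_one hr0]; linarith
      linarith
    rw [← h4, ← Real.mul_rpow (by linarith) (by positivity), ← Real.mul_rpow h0 (by norm_num),
      ← Real.mul_rpow (by positivity) (by positivity)]
    congr 1
    field_simp
  have h34 : (3 / 4 : ℝ) ^ (1 - r) * 2 ^ (r - 1) * (3 / 2) ^ (r - 1) = 4 ^ (r - 1) := by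
    rw [show (1 : ℝ) - r = -(r - 1) by ring, Real.rpow_neg (by norm_num),
      ← Real.inv_rpow (by norm_num), ← Real.mul_rpow (by norm_num) (by norm_num),
      ← Real.mul_rpow (by norm_num) (by norm_num)]
    norm_num
  have h32 : (3 / 2 : ℝ) ≤ (3 / 2) ^ (r - 1) :=
    Real.self_le_rpow_of_one_le (by norm_num) (by linarith)
  rw [hsplit, ← h34]
  have hX : 0 ≤ (2 * r * a) ^ (r / 2) := by positivity
  have hY : 0 ≤ (3 / 4 : ℝ) ^ (1 - r) * 2 ^ (r - 1) := by positivity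
  have key : 2 * (1 - 1 / r) ^ (r / 2) ≤ (3 / 2 : ℝ) ^ (r - 1) := by linarith
  calc _ = (3 / 4 : ℝ) ^ (1 - r) * 2 ^ (r - 1) * (2 * r * a) ^ (r / 2)
        * (2 * (1 - 1 / r) ^ (r / 2)) := by ring
    _ ≤ (3 / 4 : ℝ) ^ (1 - r) * 2 ^ (r - 1) * (2 * r * a) ^ (r / 2) * (3 / 2 : ℝ) ^ (r - 1) :=
        mul_le_mul_of_nonneg_left key (mul_nonneg hY hX)
    _ = _ := by ring

/-- Proposition 1 of the paper. Under the geometric ergodicity condition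
(B1) (with rate `R`, exponent `κ`, invariant probability measure `lam` and Lyapunov function
`V ≥ 1` integrable w.r.t. `lam`) and condition (B2) (`|g̃| ≤ V`), for any starting point `x`
and any `r ≥ 2` with `υ*_r(x) < ∞` and `g*_r(x) < ∞` one has, for every `n ≥ 2`,
`E_x |W̃_n(g)|^r ≤ W*_r (1 + υ*_r(x) + g*_r(x)) / n^{r/2}`, where
`W*_r = 4^{r-1}(1 + u*_r + |λ(g̃)|^r + (16r)^{r/2})` and
`u*_r = (2rR²e^κ/(e^κ-1))^{r/2}`. -/
theorem statement9
    {𝒳 : Type} [MeasurableSpace 𝒳] (M : MarkovChain 𝒳)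
    (V : 𝒳 → ℝ) (hVmeas : Measurable V) (hV1 : ∀ x, 1 ≤ V x)
    (lam : Measure 𝒳) (hlamProb : IsProbabilityMeasure lam)
    (hlamV : Integrable V lam)
    (R κ : ℝ) (hR : 0 < R) (hκ : 0 < κ)
    (hB1 : ∀ (n : ℕ) (x : 𝒳) (f : 𝒳 → ℝ), Measurable f →
      (∀ y, 0 < f y) → (∀ y, f y ≤ V y) →
      |(∫ ω, f (ω n) ∂(M.law x)) - ∫ y, f y ∂lam| ≤ R * V x * Real.exp (-κ * n))
    (g : 𝒳 → 𝒳 → ℝ) (hg : Measurable fun q : 𝒳 × 𝒳 => g q.1 q.2)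
    (hgInt : ∀ u, Integrable (fun v => g v u) (M.K u))
    (hgtildeInt : Integrable (M.gtilde g) lam)
    (hB2 : ∀ x, |M.gtilde g x| ≤ V x) :
    ∀ (x : 𝒳) (r : ℝ), 2 ≤ r →
      M.upsStar V r x < ⊤ → M.gStar g r x < ⊤ →
      ∀ n : ℕ, 2 ≤ n →
        (∫⁻ ω, ENNReal.ofReal
            (|(∑ j ∈ Finset.range n, g (ω (j + 1)) (ω j)) / n
                - ∫ y, M.gtilde g y ∂lam| ^ r) ∂(M.law x))
          ≤ ENNReal.ofReal ((4 : ℝ) ^ (r - 1) *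
                (1 + (2 * r * R ^ 2 * Real.exp κ / (Real.exp κ - 1)) ^ (r / 2)
                  + |∫ y, M.gtilde g y ∂lam| ^ r + (16 * r) ^ (r / 2)))
              * (1 + M.upsStar V r x + M.gStar g r x) / (n : ℝ≥0∞) ^ (r / 2) := by
  intro x r hr hυ hγ n hn
  set c := ∫ y, M.gtilde g y ∂lam with hcdef
  set υ := (M.upsStar V r x).toReal with hυdef
  set γ := (M.gStar g r x).toReal with hγdef
  have hυ0 : 0 ≤ υ := ENNReal.toReal_nonneg
  have hγ0 : 0 ≤ γ := ENNReal.toReal_nonneg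
  have hn0 : (0 : ℝ) < n := by
    have : 0 < n := by omega
    exact_mod_cast this
  have hq0 : 0 ≤ Real.exp κ / (Real.exp κ - 1) := by
    have := Real.one_lt_exp_iff.2 hκ
    exact div_nonneg (Real.exp_pos _).le (by linarith)
  set q := Real.exp κ / (Real.exp κ - 1) with hqdef
  have ha0 : 0 ≤ R ^ 2 * q := mul_nonneg (sq_nonneg R) hq0
  obtain ⟨hAi, hA⟩ := M.martingale_moment hVmeas hV1 hg hgInt hB2 hr hυ hγ n
  obtain ⟨hBi, hB⟩ := M.drift_moment hVmeas hV1 hlamV hR hκ hB1 (M.measurable_gtilde hg) hB2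
    hr hυ n
  set A : (ℕ → 𝒳) → ℝ := fun ω =>
    ∑ i ∈ Finset.range n, (g (ω (i + 1)) (ω i) - M.gtilde g (ω i)) with hAdef
  set B : (ℕ → 𝒳) → ℝ := fun ω => ∑ i ∈ Finset.range n, (M.gtilde g (ω i) - c) with hBdef
  have hsum : ∀ ω : ℕ → 𝒳,
      (∑ j ∈ Finset.range n, g (ω (j + 1)) (ω j)) / n - c = (A ω + B ω) / n := by
    intro ω
    simp only [hAdef, hBdef, Finset.sum_sub_distrib, Finset.sum_const, Finset.card_range,
      nsmul_eq_mul]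
    field_simp
    ring
  -- `W̃_n = (A + B) / n`, and convexity with weights `1/4`, `3/4` separates the two moments.
  set D : (ℕ → 𝒳) → ℝ := fun ω =>
    (4 ^ (r - 1) * |A ω| ^ r + (3 / 4) ^ (1 - r) * |B ω| ^ r) / (n : ℝ) ^ r with hDdef
  have hDi : Integrable D (M.law x) :=
    ((hAi.const_mul _).add (hBi.const_mul _)).div_const _
  have hD0 : ∀ ω, 0 ≤ D ω := fun ω => by positivity
  have hpt : ∀ ω : ℕ → 𝒳,
      |(∑ j ∈ Finset.range n, g (ω (j + 1)) (ω j)) / n - c| ^ r ≤ D ω := by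
    intro ω
    rw [hsum, abs_div, abs_of_pos hn0, Real.div_rpow (abs_nonneg _) hn0.le]
    refine div_le_div_of_nonneg_right ?_ (by positivity)
    refine (Real.rpow_le_rpow (abs_nonneg _) (abs_add_le _ _) (by linarith)).trans ?_
    have h := add_rpow_le_weighted (abs_nonneg (A ω)) (abs_nonneg (B ω))
      (by linarith : 1 ≤ r) (by norm_num : (0 : ℝ) < 1 / 4) (by norm_num)
    have h2 : (1 / 4 : ℝ) ^ (1 - r) = 4 ^ (r - 1) := by
      rw [one_div, Real.inv_rpow (by norm_num), ← Real.rpow_neg (by norm_num), neg_sub]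
    rwa [show (1 : ℝ) - 1 / 4 = 3 / 4 by norm_num, h2] at h
  set U := (2 * r * R ^ 2 * Real.exp κ / (Real.exp κ - 1)) ^ (r / 2) with hUdef
  have hU : (2 * r * (R ^ 2 * q)) ^ (r / 2) = U := by
    rw [hUdef, hqdef]
    congr 1
    ring
  have hU0 : 0 ≤ U := by
    rw [← hU]
    positivity
  have hDint : ∫ ω, D ω ∂(M.law x)
      ≤ 4 ^ (r - 1) * (1 + U + |c| ^ r + (16 * r) ^ (r / 2)) * (1 + υ + γ)
        / (n : ℝ) ^ (r / 2) := by
    have hint : ∫ ω, D ω ∂(M.law x) = (4 ^ (r - 1) * ∫ ω, |A ω| ^ r ∂(M.law x)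
        + (3 / 4) ^ (1 - r) * ∫ ω, |B ω| ^ r ∂(M.law x)) / (n : ℝ) ^ r := by
      rw [hDdef, integral_div, integral_add (hAi.const_mul _) (hBi.const_mul _),
        integral_const_mul, integral_const_mul]
    have hnr : (n : ℝ) ^ r = (n : ℝ) ^ (r / 2) * (n : ℝ) ^ (r / 2) := by
      rw [← Real.rpow_add hn0, add_halves]
    have hN0 : 0 < (n : ℝ) ^ (r / 2) := by positivity
    rw [Real.mul_rpow (by linarith) hn0.le] at hA hB
    have h1 := mul_le_mul_of_nonneg_right (martingale_constant_le hr) (add_nonneg hγ0 hυ0)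
    have h2 := mul_le_mul_of_nonneg_right (drift_constant_le hr ha0) hυ0
    rw [hU, ← mul_assoc 4 (R ^ 2)] at h2
    have h4 : (0 : ℝ) ≤ 4 ^ (r - 1) := by positivity
    have h34 : (0 : ℝ) ≤ (3 / 4) ^ (1 - r) := by positivity
    have hA' := mul_le_mul_of_nonneg_left hA h4
    have hB' := mul_le_mul_of_nonneg_left hB h34
    have hc0 : 0 ≤ |c| ^ r := by positivity
    have h16 : 0 ≤ (16 * r) ^ (r / 2) := by positivity
    rw [hint, hnr, ← div_div, div_le_div_iff_of_pos_right hN0, div_le_iff₀ hN0]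
    calc _ ≤ (n : ℝ) ^ (r / 2) * (4 ^ (r - 1)
            * ((2 * (r - 1)) ^ (r / 2) * 2 ^ (r - 1) * (γ + υ)))
          + (n : ℝ) ^ (r / 2) * ((3 / 4) ^ (1 - r) *
            ((2 * (r - 1)) ^ (r / 2) * (4 * R ^ 2 * q) ^ (r / 2)) * υ) := by
          refine (add_le_add hA' hB').trans (le_of_eq ?_)
          ring
      _ ≤ (n : ℝ) ^ (r / 2) * (4 ^ (r - 1) * ((16 * r) ^ (r / 2) * (γ + υ)))
          + (n : ℝ) ^ (r / 2) * (4 ^ (r - 1) * U * υ) :=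
          add_le_add (mul_le_mul_of_nonneg_left (mul_le_mul_of_nonneg_left h1 h4) hN0.le)
            (mul_le_mul_of_nonneg_left h2 hN0.le)
      _ = 4 ^ (r - 1) * (n : ℝ) ^ (r / 2) * ((16 * r) ^ (r / 2) * (γ + υ) + U * υ) := by ring
      _ ≤ 4 ^ (r - 1) * (n : ℝ) ^ (r / 2)
          * ((1 + U + |c| ^ r + (16 * r) ^ (r / 2)) * (1 + υ + γ)) := by
          refine mul_le_mul_of_nonneg_left ?_ (mul_nonneg h4 hN0.le)
          have e1 : 0 ≤ (1 + |c| ^ r) * (1 + υ + γ) := by positivity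
          have e2 : 0 ≤ U * (1 + γ) := by positivity
          nlinarith
      _ = _ := by ring
  have hW0 : 0 ≤ 4 ^ (r - 1) * (1 + U + |c| ^ r + (16 * r) ^ (r / 2)) := by positivity
  calc _ ≤ ∫⁻ ω, ENNReal.ofReal (D ω) ∂(M.law x) :=
        lintegral_mono fun ω => ENNReal.ofReal_le_ofReal (hpt ω)
    _ = ENNReal.ofReal (∫ ω, D ω ∂(M.law x)) :=
        (ofReal_integral_eq_lintegral_ofReal hDi (Eventually.of_forall hD0)).symm
    _ ≤ _ := ENNReal.ofReal_le_ofReal hDint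
    _ = _ := by
        rw [ENNReal.ofReal_div_of_pos (by positivity), ENNReal.ofReal_mul hW0,
          ENNReal.ofReal_add (by positivity) hγ0, ENNReal.ofReal_add zero_le_one hυ0,
          ENNReal.ofReal_one, hυdef, hγdef, ENNReal.ofReal_toReal hυ.ne,
          ENNReal.ofReal_toReal hγ.ne, ← ENNReal.ofReal_rpow_of_pos hn0, ENNReal.ofReal_natCast]
end
end
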